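/- Let n ≥ 1, α > 0 and 1 < q ≤ 1 + α/n. Suppose the coefficients a_{ij} satisfy condition (8) with this α and some c > 0. If u is a non-negative entire weak solution of u_t ≥ Lu + |u|^{q−1}u in S, then u = 0 in S. -/

import Mathlib

open MeasureTheory Real

noncomputable section

/-- Euclidean space ℝⁿ. -/
abbrev Xn (n : ℕ) : Type := EuclideanSpace ℝ (Fin n)

/-- Points of the half-space `S = (0,∞) × ℝⁿ`. -/
abbrev Pt (n : ℕ) : Type := ℝ × Xn n

/-- The half-space `S = (0,∞) × ℝⁿ`. -/
def halfSpace (n : ℕ) : Set (Pt n) := {p | 0 < p.1}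

/-- Partial derivative in the time variable. -/
noncomputable def pdT {n : ℕ} (w : Pt n → ℝ) (p : Pt n) : ℝ :=
  fderiv ℝ w p (1, 0)

/-- Partial derivative in the space variable `x_j`. -/
noncomputable def pdX {n : ℕ} (w : Pt n → ℝ) (j : Fin n) (p : Pt n) : ℝ :=
  fderiv ℝ w p (0, EuclideanSpace.single j 1)

/-- The odd power function `x ↦ |x|^{q-1} x`. -/
noncomputable def oddPow (q x : ℝ) : ℝ := |x| ^ (q - 1) * x

/-- Condition (8): `𝒜(R) ≤ c R^{2-α}` for all `R > 1`, expressed as an a.e. bound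
on the majorant `A` over the region `{(t,x) : t > 0, R/2 < |x| < R}`. -/
def Cond8 {n : ℕ} (A : Pt n → ℝ) (α c : ℝ) : Prop :=
  ∀ R : ℝ, 1 < R →
    ∀ᵐ p ∂(volume.restrict
        {p : Pt n | 0 < p.1 ∧ R / 2 < ‖p.2‖ ∧ ‖p.2‖ < R}),
      A p ≤ c * R ^ (2 - α)

/-- `u` is an entire weak solution of `u_t ≥ Lu + |u|^{q−1}u` in `S`. -/
def WeakSuperSol {n : ℕ} (a : Fin n → Fin n → Pt n → ℝ) (q : ℝ)
    (u : Pt n → ℝ) : Prop :=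
  ∀ φ : Pt n → ℝ, ContDiff ℝ (⊤ : ℕ∞) φ → HasCompactSupport φ →
    tsupport φ ⊆ halfSpace n → (∀ p, 0 ≤ φ p) →
    0 ≤ ∫ p in halfSpace n,
        (pdT u p * φ p + ∑ i, ∑ j, a i j p * pdX φ i p * pdX u j p
          - oddPow q (u p) * φ p)

/-- `v` is an entire weak solution of `v_t ≤ Lv + |v|^{q−1}v` in `S`. -/
def WeakSubSol {n : ℕ} (a : Fin n → Fin n → Pt n → ℝ) (q : ℝ)
    (v : Pt n → ℝ) : Prop :=
  ∀ φ : Pt n → ℝ, ContDiff ℝ (⊤ : ℕ∞) φ → HasCompactSupport φ →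
    tsupport φ ⊆ halfSpace n → (∀ p, 0 ≤ φ p) →
    ∫ p in halfSpace n,
        (pdT v p * φ p + ∑ i, ∑ j, a i j p * pdX φ i p * pdX v j p
          - oddPow q (v p) * φ p) ≤ 0

/-!
Test the inequality against `ψ^(m+2) w(u)`, where `ψ` is a cutoff and `w(y) = 1 + (1 + y/κ)^(-δ)`.
The term `w'(u) ⟨a∇u, ∇u⟩ ≤ 0` absorbs the mixed terms in `∇ψ` and `∇u`, and since `w` is bounded
above and below, for small `δ` and large `m` what remains is
`∫ ψ^(m+2) u^q ≤ C ε (κ |supp ψ| + κ^(1-q) ∫_{ψ ≠ 1} ψ^(m+2) u^q)`,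
where `ε` bounds both `-∂ₜψ` and `⟨a∇ψ, ∇ψ⟩`. On the cylinder `(0, R^α) × B_R` one can take `ε` of
order `R^(-α)`, and the volume is of order `R^(n+α)`. For `κ = μ R^(-n)` the right-hand side is then
at most `C' (μ + μ^(1-q) ∫_{ψ ≠ 1} ψ^(m+2) u^q)`, precisely because `n (q - 1) ≤ α`. A large `μ`
shows that `u^q` is integrable; letting `R → ∞` removes the tail, and then `μ → 0` gives `u = 0`.
-/

open Filter Topology Set Metric
open scoped Convolution

section Mollification

variable {E F : Type*} [NormedAddCommGroup E] [NormedSpace ℝ E] [FiniteDimensional ℝ E]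
  [NormedAddCommGroup F] [NormedSpace ℝ F] [MeasurableSpace E] (μ : Measure E)

/-- A sequence of smooth bumps at the origin with supports of radius `1 / (k + 1)`. -/
def shrinkingBump (E : Type*) [NormedAddCommGroup E] [NormedSpace ℝ E] [FiniteDimensional ℝ E]
    (k : ℕ) : ContDiffBump (0 : E) where
  rIn := 1 / ((k : ℝ) + 1) / 2
  rOut := 1 / ((k : ℝ) + 1)
  rIn_pos := by positivity
  rIn_lt_rOut := half_lt_self (by positivity)

/-- The `k`-th mollification of `φ`: its convolution with the normalized `k`-th shrinking bump. -/
def mollify (k : ℕ) (φ : E → F) : E → F :=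
  (shrinkingBump E k).normed μ ⋆[ContinuousLinearMap.lsmul ℝ ℝ, μ] φ

variable {μ}

lemma mollify_nonneg {φ : E → ℝ} (hφ : ∀ x, 0 ≤ φ x) (k : ℕ) (x : E) : 0 ≤ mollify μ k φ x :=
  integral_nonneg fun t => mul_nonneg ((shrinkingBump E k).nonneg_normed t) (hφ _)

variable [BorelSpace E] [μ.IsAddHaarMeasure]

lemma contDiff_mollify {φ : E → F} (hφ : Continuous φ) (k : ℕ) :
    ContDiff ℝ (⊤ : ℕ∞) (mollify μ k φ) :=
  (shrinkingBump E k).hasCompactSupport_normed.contDiff_convolution_left _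
    (shrinkingBump E k).contDiff_normed hφ.locallyIntegrable

lemma support_mollify_subset (φ : E → F) (k : ℕ) :
    Function.support (mollify μ k φ) ⊆ cthickening (1 / ((k : ℝ) + 1)) (tsupport φ) := by
  intro x hx
  have hx' := support_convolution_subset _ hx
  rw [(shrinkingBump E k).support_normed_eq] at hx'
  obtain ⟨z, hz, y, hy, rfl⟩ := Set.mem_add.1 hx'
  have hz' : dist z 0 < 1 / ((k : ℝ) + 1) := hz
  exact mem_cthickening_of_dist_le _ y _ _ (subset_tsupport _ hy) (by simpa using hz'.le)

lemma norm_mollify_le [CompleteSpace F] {φ : E → F} {M : ℝ} (hφ : Continuous φ)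
    (hM : ∀ x, ‖φ x‖ ≤ M) (k : ℕ) (x : E) : ‖mollify μ k φ x‖ ≤ M := by
  have hdist := dist_convolution_le (z₀ := (0 : F)) (g := φ) (x₀ := x)
    ((norm_nonneg _).trans (hM x)) (shrinkingBump E k).support_normed_eq.subset
    (shrinkingBump E k).nonneg_normed ((shrinkingBump E k).integral_normed (μ := μ))
    hφ.aestronglyMeasurable (fun y _ => by simpa using hM y)
  rwa [dist_zero_right] at hdist

lemma tendsto_mollify [CompleteSpace F] {φ : E → F} (hφ : Continuous φ) (x : E) :
    Tendsto (fun k => mollify μ k φ x) atTop (𝓝 (φ x)) :=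
  ContDiffBump.convolution_tendsto_right_of_continuous
    (φ := shrinkingBump E) tendsto_one_div_add_atTop_nhds_zero_nat hφ x

lemma fderiv_mollify {φ : E → F} (hφ : ContDiff ℝ 1 φ) (hc : HasCompactSupport φ) (k : ℕ) :
    fderiv ℝ (mollify μ k φ) = mollify μ k (fderiv ℝ φ) := by
  have hprecomp : (ContinuousLinearMap.lsmul ℝ ℝ : ℝ →L[ℝ] F →L[ℝ] F).precompR E =
      (ContinuousLinearMap.lsmul ℝ ℝ : ℝ →L[ℝ] (E →L[ℝ] F) →L[ℝ] (E →L[ℝ] F)) := by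
    ext1; rfl
  ext1 x
  rw [mollify, mollify, ← hprecomp]
  exact (hc.hasFDerivAt_convolution_right (ContinuousLinearMap.lsmul ℝ ℝ)
    (shrinkingBump E k).continuous_normed.locallyIntegrable hφ x).fderiv

end Mollification

section FirstOrderTestFunctions

variable {E : Type*} [NormedAddCommGroup E] {U K : Set E} {f φ : E → ℝ} {V : E → E}

lemma norm_mul_add_fderiv_apply_le_indicator [NormedSpace ℝ E] {M : ℝ} (hK : tsupport φ ⊆ K)
    (hM : ∀ x, ‖φ x‖ ≤ M) (hM' : ∀ x, ‖fderiv ℝ φ x‖ ≤ M) (x : E) :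
    ‖f x * φ x + fderiv ℝ φ x (V x)‖ ≤ K.indicator (fun y => M * (‖f y‖ + ‖V y‖)) x := by
  by_cases hx : x ∈ K
  · rw [indicator_of_mem hx]
    calc ‖f x * φ x + fderiv ℝ φ x (V x)‖ ≤ ‖f x‖ * ‖φ x‖ + ‖fderiv ℝ φ x‖ * ‖V x‖ :=
          norm_add_le_of_le (norm_mul_le _ _) (ContinuousLinearMap.le_opNorm _ _)
      _ ≤ ‖f x‖ * M + M * ‖V x‖ := by gcongr <;> simp only [hM, hM']
      _ = M * (‖f x‖ + ‖V x‖) := by ring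
  · have hxφ : x ∉ tsupport φ := fun h => hx (hK h)
    simp [hx, image_eq_zero_of_notMem_tsupport hxφ, fderiv_of_notMem_tsupport (𝕜 := ℝ) hxφ]

variable [MeasurableSpace E] [BorelSpace E] {μ : Measure E}

lemma integrable_indicator_mul_norm_add_norm (hf : LocallyIntegrableOn f U μ)
    (hV : LocallyIntegrableOn V U μ) (hK : IsCompact K) (hKU : K ⊆ U) (M : ℝ) :
    Integrable (K.indicator fun x => M * (‖f x‖ + ‖V x‖)) (μ.restrict U) := by
  have hfV := (hf.integrableOn_compact_subset hKU hK).norm.add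
    (hV.integrableOn_compact_subset hKU hK).norm
  exact ((integrable_indicator_iff hK.measurableSet).2 (hfV.const_mul M)).restrict

variable [NormedSpace ℝ E] [SecondCountableTopology E]

lemma aestronglyMeasurable_mul_add_fderiv_apply (hf : LocallyIntegrableOn f U μ)
    (hV : LocallyIntegrableOn V U μ) (hφ : ContDiff ℝ 1 φ) :
    AEStronglyMeasurable (fun x => f x * φ x + fderiv ℝ φ x (V x)) (μ.restrict U) :=
  (hf.aestronglyMeasurable.mul hφ.continuous.aestronglyMeasurable).add
    (Continuous.comp_aestronglyMeasurable₂ (g := fun (L : E →L[ℝ] ℝ) v => L v) (by fun_prop)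
      (hφ.continuous_fderiv one_ne_zero).aestronglyMeasurable hV.aestronglyMeasurable)

lemma integrableOn_mul_add_fderiv_apply (hf : LocallyIntegrableOn f U μ)
    (hV : LocallyIntegrableOn V U μ) (hφ : ContDiff ℝ 1 φ) (hc : HasCompactSupport φ)
    (hφU : tsupport φ ⊆ U) : IntegrableOn (fun x => f x * φ x + fderiv ℝ φ x (V x)) U μ := by
  obtain ⟨M, hM⟩ := hc.exists_bound_of_continuous hφ.continuous
  obtain ⟨M', hM'⟩ := (hc.fderiv ℝ).exists_bound_of_continuous (hφ.continuous_fderiv one_ne_zero)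
  exact (integrable_indicator_mul_norm_add_norm hf hV hc hφU (max M M')).mono'
    (aestronglyMeasurable_mul_add_fderiv_apply hf hV hφ)
    (Eventually.of_forall (norm_mul_add_fderiv_apply_le_indicator le_rfl
      (fun x => (hM x).trans (le_max_left _ _)) (fun x => (hM' x).trans (le_max_right _ _))))

variable [FiniteDimensional ℝ E] [μ.IsAddHaarMeasure]

/- Mollify: `mollify μ k φ` and its derivative converge boundedly to `φ` and `fderiv ℝ φ`, with
supports in a fixed compact subset of `U` once `k ≥ k₀`. -/
lemma setIntegral_mul_add_fderiv_apply_nonneg (hU : IsOpen U) (hf : LocallyIntegrableOn f U μ)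
    (hV : LocallyIntegrableOn V U μ)
    (hsmooth : ∀ χ : E → ℝ, ContDiff ℝ (⊤ : ℕ∞) χ → HasCompactSupport χ → tsupport χ ⊆ U →
      (∀ x, 0 ≤ χ x) → 0 ≤ ∫ x in U, (f x * χ x + fderiv ℝ χ x (V x)) ∂μ)
    (hφ : ContDiff ℝ 1 φ) (hc : HasCompactSupport φ) (hφU : tsupport φ ⊆ U) (hφ0 : ∀ x, 0 ≤ φ x) :
    0 ≤ ∫ x in U, (f x * φ x + fderiv ℝ φ x (V x)) ∂μ := by
  have hφ' := hφ.continuous_fderiv one_ne_zero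
  obtain ⟨M, hM⟩ := hc.exists_bound_of_continuous hφ.continuous
  obtain ⟨M', hM'⟩ := (hc.fderiv ℝ).exists_bound_of_continuous hφ'
  obtain ⟨r, hr, hrU⟩ := hc.isCompact.exists_cthickening_subset_open hU hφU
  obtain ⟨k₀, hk₀⟩ := exists_nat_one_div_lt hr
  have hsupp {k : ℕ} (hk : k₀ ≤ k) : tsupport (mollify μ k φ) ⊆ cthickening r (tsupport φ) :=
    closure_minimal ((support_mollify_subset φ k).trans
      (cthickening_mono ((Nat.one_div_le_one_div hk).trans hk₀.le) _)) isClosed_cthickening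
  have hcpt : IsCompact (cthickening r (tsupport φ)) := hc.isCompact.cthickening
  have hlim : Tendsto (fun k => ∫ x in U, (f x * mollify μ k φ x +
      fderiv ℝ (mollify μ k φ) x (V x)) ∂μ) atTop
      (𝓝 (∫ x in U, (f x * φ x + fderiv ℝ φ x (V x)) ∂μ)) := by
    refine tendsto_integral_filter_of_dominated_convergence _ (Eventually.of_forall fun k =>
      aestronglyMeasurable_mul_add_fderiv_apply hf hV
        ((contDiff_mollify hφ.continuous k).of_le (mod_cast le_top))) ?_
      (integrable_indicator_mul_norm_add_norm hf hV hcpt hrU (max M M')) ?_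
    · filter_upwards [eventually_ge_atTop k₀] with k hk
      refine Eventually.of_forall (norm_mul_add_fderiv_apply_le_indicator (hsupp hk)
        (norm_mollify_le hφ.continuous (fun x => (hM x).trans (le_max_left _ _)) k) fun x => ?_)
      rw [fderiv_mollify hφ hc]
      exact norm_mollify_le hφ' (fun x => (hM' x).trans (le_max_right _ _)) k x
    · refine Eventually.of_forall fun x => ((tendsto_mollify hφ.continuous x).const_mul _).add ?_
      simp_rw [fderiv_mollify hφ hc]
      exact ((ContinuousLinearMap.apply ℝ ℝ (V x)).continuous.tendsto _).comp
        (tendsto_mollify hφ' x)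
  refine ge_of_tendsto hlim ?_
  filter_upwards [eventually_ge_atTop k₀] with k hk
  exact hsmooth _ (contDiff_mollify hφ.continuous k)
    (hcpt.of_isClosed_subset (isClosed_tsupport _) (hsupp hk))
    ((hsupp hk).trans hrU) (mollify_nonneg hφ0 k)

end FirstOrderTestFunctions

lemma locallyIntegrableOn_finsetSum {X E ι : Type*} [TopologicalSpace X] [MeasurableSpace X]
    {μ : Measure X} {U : Set X} [NormedAddCommGroup E] {f : ι → X → E} (s : Finset ι)
    (hf : ∀ i, LocallyIntegrableOn (f i) U μ) : LocallyIntegrableOn (∑ i ∈ s, f i) U μ :=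
  Finset.sum_induction f (fun g => LocallyIntegrableOn g U μ) (fun _ _ hg hh => hg.add hh)
    locallyIntegrableOn_zero fun i _ => hf i

section HalfSpace

variable {n : ℕ} {q : ℝ} {a : Fin n → Fin n → Pt n → ℝ} {u φ : Pt n → ℝ}

instance isAddHaarMeasure_volume_pt : (volume : Measure (Pt n)).IsAddHaarMeasure :=
  inferInstanceAs ((volume : Measure ℝ).prod (volume : Measure (Xn n))).IsAddHaarMeasure

lemma isOpen_halfSpace : IsOpen (halfSpace n) := isOpen_lt continuous_const continuous_fst

lemma measurableSet_halfSpace : MeasurableSet (halfSpace n) := isOpen_halfSpace.measurableSet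

lemma continuousOn_pdT (hu : ContDiffOn ℝ 1 u (halfSpace n)) :
    ContinuousOn (pdT u) (halfSpace n) :=
  (hu.continuousOn_fderiv_of_isOpen isOpen_halfSpace le_rfl).clm_apply continuousOn_const

lemma continuousOn_pdX (hu : ContDiffOn ℝ 1 u (halfSpace n)) (j : Fin n) :
    ContinuousOn (pdX u j) (halfSpace n) :=
  (hu.continuousOn_fderiv_of_isOpen isOpen_halfSpace le_rfl).clm_apply continuousOn_const

lemma oddPow_of_nonneg {x : ℝ} (hq : q ≠ 0) (hx : 0 ≤ x) : oddPow q x = x ^ q := by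
  rw [oddPow, abs_of_nonneg hx]
  obtain rfl | hx := hx.eq_or_lt
  · rw [mul_zero, zero_rpow hq]
  · rw [rpow_sub_one hx.ne', div_mul_cancel₀ _ hx.ne']

lemma continuous_oddPow (hq : 1 ≤ q) : Continuous (oddPow q) :=
  (continuous_abs.rpow_const fun _ => Or.inr (sub_nonneg.2 hq)).mul continuous_id

/-- The spatial gradient of `w` at `p`. -/
def gradX (w : Pt n → ℝ) (p : Pt n) : Xn n := WithLp.toLp 2 fun i => pdX w i p

/-- The quadratic form `ξ, η ↦ ∑ a_ij(p) ξ_i η_j` of the operator `L` at the point `p`. -/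
def diffusionForm (a : Fin n → Fin n → Pt n → ℝ) (p : Pt n) : LinearMap.BilinForm ℝ (Xn n) :=
  LinearMap.mk₂ ℝ (fun ξ η => ∑ i, ∑ j, a i j p * ξ i * η j)
    (fun _ _ _ => by simp only [PiLp.add_apply, mul_add, add_mul, Finset.sum_add_distrib])
    (fun _ _ _ => by
      simp only [PiLp.smul_apply, smul_eq_mul, Finset.mul_sum, mul_assoc, mul_left_comm])
    (fun _ _ _ => by simp only [PiLp.add_apply, mul_add, Finset.sum_add_distrib])
    (fun _ _ _ => by simp only [PiLp.smul_apply, smul_eq_mul, Finset.mul_sum, mul_left_comm])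

lemma diffusionForm_apply (p : Pt n) (ξ η : Xn n) :
    diffusionForm a p ξ η = ∑ i, ∑ j, a i j p * ξ i * η j := rfl

lemma isSymm_diffusionForm {p : Pt n} (ha : ∀ i j, a i j p = a j i p) :
    (diffusionForm a p).IsSymm where
  eq ξ η := by
    simp only [diffusionForm_apply]
    rw [Finset.sum_comm]
    simp only [ha, mul_right_comm]

/-- The integrand of the weak formulation of `u_t ≥ Lu + |u|^{q-1}u` tested against `φ`. -/
def weakIntegrand (a : Fin n → Fin n → Pt n → ℝ) (q : ℝ) (u φ : Pt n → ℝ) (p : Pt n) : ℝ :=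
  pdT u p * φ p + diffusionForm a p (gradX φ p) (gradX u p) - oddPow q (u p) * φ p

/-- The vector field `a ∇u`, viewed as a field on space-time without time component. -/
def flux (a : Fin n → Fin n → Pt n → ℝ) (u : Pt n → ℝ) : Pt n → Pt n :=
  ∑ i, ∑ j, fun p => a i j p • pdX u j p • ((0, EuclideanSpace.single i 1) : Pt n)

lemma fderiv_apply_flux (p : Pt n) :
    fderiv ℝ φ p (flux a u p) = diffusionForm a p (gradX φ p) (gradX u p) := by
  simp only [flux, Finset.sum_apply, map_sum, map_smul, smul_eq_mul, diffusionForm_apply]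
  exact Finset.sum_congr rfl fun i _ => Finset.sum_congr rfl fun j _ => by
    rw [mul_assoc, mul_comm (pdX u j p)]; rfl

lemma weakIntegrand_eq (p : Pt n) :
    weakIntegrand a q u φ p =
      (pdT u p - oddPow q (u p)) * φ p + fderiv ℝ φ p (flux a u p) := by
  rw [weakIntegrand, fderiv_apply_flux]; ring

lemma locallyIntegrableOn_flux (ha : ∀ i j, LocallyIntegrableOn (a i j) (halfSpace n))
    (hu : ContDiffOn ℝ 1 u (halfSpace n)) : LocallyIntegrableOn (flux a u) (halfSpace n) :=
  locallyIntegrableOn_finsetSum _ fun i => locallyIntegrableOn_finsetSum _ fun j =>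
    (ha i j).smul_continuousOn isOpen_halfSpace.isLocallyClosed
      ((continuousOn_pdX hu j).smul continuousOn_const)

lemma locallyIntegrableOn_pdT_sub_oddPow (hq : 1 ≤ q) (hu : ContDiffOn ℝ 1 u (halfSpace n)) :
    LocallyIntegrableOn (fun p => pdT u p - oddPow q (u p)) (halfSpace n) :=
  ((continuousOn_pdT hu).sub ((continuous_oddPow hq).comp_continuousOn
    hu.continuousOn)).locallyIntegrableOn measurableSet_halfSpace

lemma integrableOn_weakIntegrand (hq : 1 ≤ q)
    (ha : ∀ i j, LocallyIntegrableOn (a i j) (halfSpace n)) (hu : ContDiffOn ℝ 1 u (halfSpace n))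
    (hφ : ContDiff ℝ 1 φ) (hc : HasCompactSupport φ) (hφS : tsupport φ ⊆ halfSpace n) :
    IntegrableOn (weakIntegrand a q u φ) (halfSpace n) := by
  rw [funext weakIntegrand_eq]
  exact integrableOn_mul_add_fderiv_apply (locallyIntegrableOn_pdT_sub_oddPow hq hu)
    (locallyIntegrableOn_flux ha hu) hφ hc hφS

lemma WeakSuperSol.setIntegral_weakIntegrand_nonneg (hsup : WeakSuperSol a q u) (hq : 1 ≤ q)
    (ha : ∀ i j, LocallyIntegrableOn (a i j) (halfSpace n)) (hu : ContDiffOn ℝ 1 u (halfSpace n))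
    (hφ : ContDiff ℝ 1 φ) (hc : HasCompactSupport φ) (hφS : tsupport φ ⊆ halfSpace n)
    (hφ0 : ∀ p, 0 ≤ φ p) : 0 ≤ ∫ p in halfSpace n, weakIntegrand a q u φ p := by
  simp only [weakIntegrand_eq]
  refine setIntegral_mul_add_fderiv_apply_nonneg isOpen_halfSpace
    (locallyIntegrableOn_pdT_sub_oddPow hq hu) (locallyIntegrableOn_flux ha hu)
    (fun χ hχ hχc hχS hχ0 => ?_) hφ hc hφS hφ0
  simp only [← weakIntegrand_eq]
  exact hsup χ hχ hχc hχS hχ0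

end HalfSpace

lemma mul_apply_sub_mul_apply_self_le {E : Type*} [AddCommGroup E] [Module ℝ E]
    {B : LinearMap.BilinForm ℝ E} (hB : B.IsSymm) (hB0 : ∀ x, 0 ≤ B x x) {γ : ℝ} (hγ : 0 < γ)
    (b : ℝ) (x y : E) : b * B y x - γ * B x x ≤ b ^ 2 / (4 * γ) * B y y := by
  have hsq := hB0 ((2 * γ) • x - b • y)
  simp only [map_sub, LinearMap.sub_apply, map_smul, LinearMap.smul_apply, smul_eq_mul] at hsq
  rw [show B x y = B y x from hB.eq x y] at hsq
  rw [div_mul_eq_mul_div, le_div_iff₀ (by positivity)]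
  linarith

section RealInequalities

lemma exists_exponents {q : ℝ} (hq : 1 < q) :
    ∃ δ : ℝ, 0 < δ ∧ δ ≤ 1 / 2 ∧ ∃ m : ℕ, (1 + δ) * (m + 2) ≤ m * q := by
  obtain ⟨δ, hδ, hδ'⟩ : ∃ δ : ℝ, 0 < δ ∧ δ < min (1 / 2) (q - 1) :=
    exists_between (lt_min one_half_pos (sub_pos.2 hq))
  obtain ⟨hδ2, hδq⟩ := lt_min_iff.1 hδ'
  obtain ⟨m, hm⟩ := exists_nat_ge ((1 + δ) * 2 / (q - 1 - δ))
  rw [div_le_iff₀ (by linarith)] at hm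
  exact ⟨δ, hδ, hδ2.le, m, by linarith⟩

lemma one_add_rpow_le {z r q : ℝ} (hz : 0 ≤ z) (hr : 0 ≤ r) (hrq : r ≤ q) :
    (1 + z) ^ r ≤ 2 ^ r * (1 + z ^ q) := by
  obtain hz1 | hz1 := le_total z 1
  · calc (1 + z) ^ r ≤ 2 ^ r := by gcongr; linarith
      _ ≤ 2 ^ r * (1 + z ^ q) :=
        le_mul_of_one_le_right (by positivity) (le_add_of_nonneg_right (by positivity))
  · calc (1 + z) ^ r ≤ (2 * z) ^ r := by gcongr; linarith
      _ = 2 ^ r * z ^ r := mul_rpow zero_le_two hz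
      _ ≤ 2 ^ r * (1 + z ^ q) := by
        gcongr
        exact (rpow_le_rpow_of_exponent_le hz1 hrq).trans (by linarith)

/- With `y = ψ ^ (k / q)` the left side is at most `((1 + w) y) ^ r ≤ (1 + w y) ^ r`. -/
lemma one_add_rpow_mul_pow_le {w ψ r q : ℝ} {m k : ℕ} (hw : 0 ≤ w) (hψ0 : 0 ≤ ψ) (hψ1 : ψ ≤ 1)
    (hr : 0 ≤ r) (hq : 0 < q) (hrq : r ≤ q) (hrk : r * k ≤ m * q) :
    (1 + w) ^ r * ψ ^ m ≤ 2 ^ r * (1 + w ^ q * ψ ^ k) := by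
  set y := ψ ^ (k / q) with hy
  have hy0 : 0 ≤ y := by positivity
  have hy1 : y ≤ 1 := rpow_le_one hψ0 hψ1 (by positivity)
  have hψm : ψ ^ m ≤ y ^ r := by
    rw [hy, ← rpow_mul hψ0, ← rpow_natCast]
    refine rpow_le_rpow_of_exponent_ge' hψ0 hψ1 (by positivity) ?_
    rwa [div_mul_eq_mul_div, div_le_iff₀ hq, mul_comm]
  have hyq : y ^ q = ψ ^ k := by rw [hy, ← rpow_mul hψ0, div_mul_cancel₀ _ hq.ne', rpow_natCast]
  calc (1 + w) ^ r * ψ ^ m ≤ (1 + w) ^ r * y ^ r := by gcongr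
    _ = ((1 + w) * y) ^ r := (mul_rpow (by positivity) hy0).symm
    _ ≤ (1 + w * y) ^ r := by gcongr; linarith
    _ ≤ 2 ^ r * (1 + (w * y) ^ q) := one_add_rpow_le (by positivity) hr hrq
    _ = 2 ^ r * (1 + w ^ q * ψ ^ k) := by rw [mul_rpow hw hy0, hyq]

end RealInequalities

section Weight

variable {δ κ y : ℝ}

/-- The decreasing weight `1 + (1 + y/κ)^(-δ)` by which cutoffs are multiplied to form the test
function. Its strict monotonicity produces the quadratic term in `∇u` which absorbs the mixed
terms. -/
def weight (δ κ y : ℝ) : ℝ := 1 + (1 + y / κ) ^ (-δ)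

/-- A primitive of `weight δ κ`. -/
def weightPrimitive (δ κ y : ℝ) : ℝ := y + κ * (1 + y / κ) ^ (1 - δ) / (1 - δ)

lemma one_add_div_pos (hκ : 0 < κ) (hy : 0 ≤ y) : 0 < 1 + y / κ := by positivity

lemma one_le_weight (hκ : 0 < κ) (hy : 0 ≤ y) : 1 ≤ weight δ κ y :=
  le_add_of_nonneg_right (rpow_nonneg (one_add_div_pos hκ hy).le _)

lemma weight_le_two (hδ : 0 ≤ δ) (hκ : 0 < κ) (hy : 0 ≤ y) : weight δ κ y ≤ 2 := by
  have hle : (1 + y / κ) ^ (-δ) ≤ 1 :=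
    rpow_le_one_of_one_le_of_nonpos (le_add_of_nonneg_right (by positivity)) (neg_nonpos.2 hδ)
  rw [weight]; linarith

lemma hasDerivAt_one_add_div_rpow (r : ℝ) (hκ : 0 < κ) (hy : 0 ≤ y) :
    HasDerivAt (fun y => (1 + y / κ) ^ r) (r * (1 + y / κ) ^ (r - 1) / κ) y := by
  have hlin : HasDerivAt (fun y => 1 + y / κ) (1 / κ) y :=
    ((hasDerivAt_id y).div_const κ).const_add 1
  exact (hlin.rpow_const (p := r) (Or.inl (one_add_div_pos hκ hy).ne')).congr_deriv (by ring)

lemma hasDerivAt_weight (hκ : 0 < κ) (hy : 0 ≤ y) :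
    HasDerivAt (weight δ κ) (-(δ * (1 + y / κ) ^ (-δ - 1) / κ)) y :=
  ((hasDerivAt_one_add_div_rpow (-δ) hκ hy).const_add 1).congr_deriv (by ring)

lemma hasDerivAt_weightPrimitive (hδ : δ ≠ 1) (hκ : 0 < κ) (hy : 0 ≤ y) :
    HasDerivAt (weightPrimitive δ κ) (weight δ κ y) y := by
  have hδ' : 1 - δ ≠ 0 := sub_ne_zero.2 hδ.symm
  refine ((hasDerivAt_id y).add (((hasDerivAt_one_add_div_rpow (1 - δ) hκ hy).const_mul
    κ).div_const (1 - δ))).congr_deriv ?_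
  rw [weight, show 1 - δ - 1 = -δ by ring]
  field_simp

lemma contDiffAt_one_add_div_rpow (r : ℝ) (hκ : 0 < κ) (hy : 0 ≤ y) :
    ContDiffAt ℝ 1 (fun y => (1 + y / κ) ^ r) y :=
  (contDiffAt_const.add (contDiffAt_id.div_const κ)).rpow_const_of_ne (one_add_div_pos hκ hy).ne'

lemma contDiffAt_weight (hκ : 0 < κ) (hy : 0 ≤ y) : ContDiffAt ℝ 1 (weight δ κ) y :=
  contDiffAt_const.add (contDiffAt_one_add_div_rpow _ hκ hy)

lemma contDiffAt_weightPrimitive (hκ : 0 < κ) (hy : 0 ≤ y) :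
    ContDiffAt ℝ 1 (weightPrimitive δ κ) y :=
  contDiffAt_id.add ((contDiffAt_const.mul (contDiffAt_one_add_div_rpow _ hκ hy)).div_const _)

lemma weightPrimitive_nonneg (hδ : δ ≤ 1) (hκ : 0 < κ) (hy : 0 ≤ y) :
    0 ≤ weightPrimitive δ κ y := by
  have := rpow_nonneg (one_add_div_pos hκ hy).le (1 - δ)
  have := sub_nonneg.2 hδ
  rw [weightPrimitive]; positivity

lemma weightPrimitive_le (hδ : 0 ≤ δ) (hδ2 : δ ≤ 1 / 2) (hκ : 0 < κ) (hy : 0 ≤ y) :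
    weightPrimitive δ κ y ≤ 3 * κ * (1 + y / κ) ^ (1 + δ) := by
  have hz : 1 ≤ 1 + y / κ := le_add_of_nonneg_right (by positivity)
  have hlin : y ≤ κ * (1 + y / κ) ^ (1 + δ) :=
    calc y ≤ κ * (1 + y / κ) := by rw [mul_add, mul_div_cancel₀ _ hκ.ne']; linarith
      _ ≤ κ * (1 + y / κ) ^ (1 + δ) := by
        gcongr
        exact self_le_rpow_of_one_le hz (by linarith)
  have hpow : κ * (1 + y / κ) ^ (1 - δ) / (1 - δ) ≤ 2 * (κ * (1 + y / κ) ^ (1 + δ)) := by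
    rw [div_le_iff₀ (by linarith), mul_right_comm]
    calc κ * (1 + y / κ) ^ (1 - δ) ≤ κ * (1 + y / κ) ^ (1 + δ) := by gcongr; linarith
      _ ≤ 2 * (1 - δ) * (κ * (1 + y / κ) ^ (1 + δ)) :=
        le_mul_of_one_le_left (by positivity) (by linarith)
  rw [weightPrimitive]; linarith

lemma weight_sq_div_le (b : ℝ) (hδ : 0 < δ) (hκ : 0 < κ) (hy : 0 ≤ y) :
    (b * weight δ κ y) ^ 2 / (4 * (δ * (1 + y / κ) ^ (-δ - 1) / κ)) ≤
      b ^ 2 * κ / δ * (1 + y / κ) ^ (1 + δ) := by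
  set z := 1 + y / κ
  have hz : 0 < z := one_add_div_pos hκ hy
  have hzz : z ^ (1 + δ) * z ^ (-δ - 1) = 1 := by
    rw [← rpow_add hz, show 1 + δ + (-δ - 1) = 0 by ring, rpow_zero]
  rw [div_le_iff₀ (by positivity)]
  calc (b * weight δ κ y) ^ 2 = b ^ 2 * weight δ κ y ^ 2 := mul_pow _ _ _
    _ ≤ b ^ 2 * 2 ^ 2 := by
      gcongr
      exacts [zero_le_one.trans (one_le_weight hκ hy), weight_le_two hδ.le hκ hy]
    _ = b ^ 2 * 2 ^ 2 * (z ^ (1 + δ) * z ^ (-δ - 1)) := by rw [hzz, mul_one]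
    _ = b ^ 2 * κ / δ * z ^ (1 + δ) * (4 * (δ * z ^ (-δ - 1) / κ)) := by field_simp; ring

end Weight

section CompactlySupportedDerivatives

lemma tsupport_pow_mul_subset {E : Type*} [TopologicalSpace E] (ψ g : E → ℝ) (k : ℕ) :
    tsupport (fun x => ψ x ^ (k + 1) * g x) ⊆ tsupport ψ :=
  closure_mono fun _ hx => ne_zero_pow k.succ_ne_zero (left_ne_zero_of_mul hx)

variable {E : Type*} [NormedAddCommGroup E] [NormedSpace ℝ E]

lemma fderiv_pow_mul_comp {ψ u : E → ℝ} {G : ℝ → ℝ} {G' : ℝ} {x : E} (k : ℕ)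
    (hψ : DifferentiableAt ℝ ψ x) (hu : DifferentiableAt ℝ u x) (hG : HasDerivAt G G' (u x)) :
    fderiv ℝ (fun y => ψ y ^ (k + 1) * G (u y)) x =
      ((k + 1) * ψ x ^ k * G (u x)) • fderiv ℝ ψ x + (ψ x ^ (k + 1) * G') • fderiv ℝ u x := by
  refine ((hψ.hasFDerivAt.pow (k + 1)).mul
    (hG.comp_hasFDerivAt x hu.hasFDerivAt)).fderiv.trans ?_
  ext v
  simp only [add_apply, smul_apply, smul_eq_mul, nsmul_eq_mul, Nat.add_sub_cancel, Nat.cast_add,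
    Nat.cast_one, Function.comp_apply]
  ring

lemma contDiff_pow_mul_comp {ψ u : E → ℝ} {G : ℝ → ℝ} {U : Set E} (k : ℕ) (hU : IsOpen U)
    (hψ : ContDiff ℝ 1 ψ) (hψU : tsupport ψ ⊆ U) (hu : ContDiffOn ℝ 1 u U)
    (hG : ∀ x ∈ U, ContDiffAt ℝ 1 G (u x)) :
    ContDiff ℝ 1 (fun x => ψ x ^ (k + 1) * G (u x)) := by
  refine contDiff_iff_contDiffAt.2 fun x => ?_
  by_cases hx : x ∈ tsupport ψ
  · have hxU := hψU hx
    exact (hψ.contDiffAt.pow _).mul ((hG x hxU).comp x (hu.contDiffAt (hU.mem_nhds hxU)))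
  · have hx' := fun h => hx (tsupport_pow_mul_subset ψ (G ∘ u) k h)
    exact contDiffAt_const.congr_of_eventuallyEq (notMem_tsupport_iff_eventuallyEq.1 hx')

variable [MeasurableSpace E] [BorelSpace E] {μ : Measure E}

lemma integrable_fderiv_apply [IsFiniteMeasureOnCompacts μ] {F : E → ℝ} (hF : ContDiff ℝ 1 F)
    (hc : HasCompactSupport F) (v : E) : Integrable (fun x => fderiv ℝ F x v) μ :=
  ((hF.continuous_fderiv one_ne_zero).clm_apply
    continuous_const).integrable_of_hasCompactSupport (hc.fderiv_apply (𝕜 := ℝ) v)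

lemma integral_fderiv_apply_eq_zero [FiniteDimensional ℝ E] [μ.IsAddHaarMeasure] {F : E → ℝ}
    (hF : ContDiff ℝ 1 F) (hc : HasCompactSupport F) (v : E) : ∫ x, fderiv ℝ F x v ∂μ = 0 := by
  have hparts := integral_mul_fderiv_eq_neg_fderiv_mul_of_integrable (μ := μ)
    (f := fun _ => (1 : ℝ)) (g := F) (v := v) (by simp)
    (by simpa using integrable_fderiv_apply hF hc v)
    (by simpa using hF.continuous.integrable_of_hasCompactSupport hc)
    (fun _ _ => differentiableAt_const _) (fun x _ => hF.differentiable one_ne_zero x)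
  simpa using hparts

end CompactlySupportedDerivatives

section PointwiseEstimate

variable {n m : ℕ} {q δ κ : ℝ} {a : Fin n → Fin n → Pt n → ℝ} {u ψ : Pt n → ℝ} {p : Pt n}

lemma pdT_pow_mul_comp {G : ℝ → ℝ} {G' : ℝ} (k : ℕ) (hψ : DifferentiableAt ℝ ψ p)
    (hu : DifferentiableAt ℝ u p) (hG : HasDerivAt G G' (u p)) :
    pdT (fun y => ψ y ^ (k + 1) * G (u y)) p =
      (k + 1) * ψ p ^ k * G (u p) * pdT ψ p + ψ p ^ (k + 1) * G' * pdT u p := by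
  simp only [pdT, fderiv_pow_mul_comp k hψ hu hG, add_apply, smul_apply, smul_eq_mul]

lemma gradX_pow_mul_comp {G : ℝ → ℝ} {G' : ℝ} (k : ℕ) (hψ : DifferentiableAt ℝ ψ p)
    (hu : DifferentiableAt ℝ u p) (hG : HasDerivAt G G' (u p)) :
    gradX (fun y => ψ y ^ (k + 1) * G (u y)) p =
      ((k + 1) * ψ p ^ k * G (u p)) • gradX ψ p + (ψ p ^ (k + 1) * G') • gradX u p := by
  ext i
  simp only [gradX, pdX, fderiv_pow_mul_comp k hψ hu hG, add_apply, smul_apply, smul_eq_mul,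
    PiLp.add_apply, PiLp.smul_apply]

/- The derivative of the weight contributes `-γ B(ψ∇u, ψ∇u)`, which absorbs the mixed term
`(m + 2) weight(u) B(∇ψ, ψ∇u)`. -/
lemma diffusionForm_gradX_pow_mul_weight_le (hδ : 0 < δ) (hκ : 0 < κ)
    (hψ : DifferentiableAt ℝ ψ p) (hψ0 : 0 ≤ ψ p) (hu : DifferentiableAt ℝ u p) (hu0 : 0 ≤ u p)
    (hsymm : (diffusionForm a p).IsSymm) (hnonneg : ∀ ξ, 0 ≤ diffusionForm a p ξ ξ) :
    diffusionForm a p (gradX (fun y => ψ y ^ (m + 2) * weight δ κ (u y)) p) (gradX u p) ≤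
      (m + 2) ^ 2 * κ / δ * (1 + u p / κ) ^ (1 + δ) * ψ p ^ m *
        diffusionForm a p (gradX ψ p) (gradX ψ p) := by
  set B := diffusionForm a p
  set z := 1 + u p / κ
  set W := weight δ κ (u p)
  have : 0 < z := one_add_div_pos hκ hu0
  set γ := δ * z ^ (-δ - 1) / κ
  have hγ0 : 0 < γ := by positivity
  have hcoeff := weight_sq_div_le (m + 2) hδ hκ hu0
  calc B (gradX (fun y => ψ y ^ (m + 2) * weight δ κ (u y)) p) (gradX u p)
      = ψ p ^ m * ((m + 2) * W * B (gradX ψ p) (ψ p • gradX u p) -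
          γ * B (ψ p • gradX u p) (ψ p • gradX u p)) := by
        rw [gradX_pow_mul_comp (m + 1) hψ hu (hasDerivAt_weight hκ hu0)]
        simp only [map_add, map_smul, LinearMap.add_apply, LinearMap.smul_apply, smul_eq_mul]
        push_cast
        ring
    _ ≤ ψ p ^ m * (((m + 2) * W) ^ 2 / (4 * γ) * B (gradX ψ p) (gradX ψ p)) := by
        gcongr
        exact mul_apply_sub_mul_apply_self_le hsymm hnonneg hγ0 _ _ _
    _ ≤ ψ p ^ m * ((m + 2) ^ 2 * κ / δ * z ^ (1 + δ) * B (gradX ψ p) (gradX ψ p)) := by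
        gcongr
        exact hnonneg _
    _ = _ := by ring

lemma weakIntegrand_pow_mul_weight_le (hq : q ≠ 0) (hδ : 0 < δ) (hδ1 : δ ≠ 1) (hκ : 0 < κ)
    (hψ : DifferentiableAt ℝ ψ p) (hψ0 : 0 ≤ ψ p) (hu : DifferentiableAt ℝ u p) (hu0 : 0 ≤ u p)
    (hsymm : (diffusionForm a p).IsSymm) (hnonneg : ∀ ξ, 0 ≤ diffusionForm a p ξ ξ) :
    weakIntegrand a q u (fun y => ψ y ^ (m + 2) * weight δ κ (u y)) p ≤
      pdT (fun y => ψ y ^ (m + 2) * weightPrimitive δ κ (u y)) p - ψ p ^ (m + 2) * u p ^ q +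
        ((m + 2) * ψ p ^ (m + 1) * weightPrimitive δ κ (u p) * -pdT ψ p +
          (m + 2) ^ 2 * κ / δ * (1 + u p / κ) ^ (1 + δ) * ψ p ^ m *
            diffusionForm a p (gradX ψ p) (gradX ψ p)) := by
  have htime := pdT_pow_mul_comp (m + 1) hψ hu (hasDerivAt_weightPrimitive hδ1 hκ hu0)
  push_cast at htime
  have hspace := diffusionForm_gradX_pow_mul_weight_le (m := m) hδ hκ hψ hψ0 hu hu0 hsymm hnonneg
  have hsource : ψ p ^ (m + 2) * u p ^ q ≤ u p ^ q * (ψ p ^ (m + 2) * weight δ κ (u p)) := by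
    rw [mul_comm (u p ^ q), mul_right_comm]
    exact le_mul_of_one_le_right (by positivity) (one_le_weight hκ hu0)
  rw [weakIntegrand, oddPow_of_nonneg hq hu0, htime]
  linarith

/-- The constant of the a priori estimate for test functions built from the `(m + 2)`-nd power of
a cutoff and the weight with exponent `δ`. -/
def aprioriConst (δ : ℝ) (m : ℕ) : ℝ := 2 ^ (1 + δ) * (3 * (m + 2) + (m + 2) ^ 2 / δ)

lemma aprioriConst_nonneg (hδ : 0 ≤ δ) : 0 ≤ aprioriConst δ m := by
  rw [aprioriConst]; positivity

lemma cutoff_error_le {y s t b ε : ℝ} (hδ : 0 < δ) (hδ2 : δ ≤ 1 / 2)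
    (hm : (1 + δ) * (m + 2) ≤ m * q) (hκ : 0 < κ) (hy : 0 ≤ y) (hs0 : 0 ≤ s) (hs1 : s ≤ 1)
    (hε : 0 ≤ ε) (ht : t ≤ ε) (hb : b ≤ ε) :
    (m + 2) * s ^ (m + 1) * weightPrimitive δ κ y * t +
        (m + 2) ^ 2 * κ / δ * (1 + y / κ) ^ (1 + δ) * s ^ m * b ≤
      aprioriConst δ m * ε * (κ + κ ^ (1 - q) * (s ^ (m + 2) * y ^ q)) := by
  have hq : 1 + δ ≤ q := by
    by_contra! hlt
    nlinarith [(m.cast_nonneg : (0 : ℝ) ≤ m)]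
  have hP0 := weightPrimitive_nonneg (hδ2.trans one_half_lt_one.le) hκ hy
  have hP := weightPrimitive_le hδ.le hδ2 hκ hy
  set X := (1 + y / κ) ^ (1 + δ) * s ^ m with hX
  have : 0 ≤ X := by positivity
  have hYoung : X ≤ 2 ^ (1 + δ) * (1 + (y / κ) ^ q * s ^ (m + 2)) :=
    one_add_rpow_mul_pow_le (by positivity) hs0 hs1 (by linarith) (by linarith) hq
      (by push_cast; exact hm)
  have hκq : κ * (y / κ) ^ q = κ ^ (1 - q) * y ^ q := by
    rw [div_rpow hy hκ.le, rpow_sub hκ, rpow_one]; ring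
  calc (m + 2) * s ^ (m + 1) * weightPrimitive δ κ y * t +
        (m + 2) ^ 2 * κ / δ * (1 + y / κ) ^ (1 + δ) * s ^ m * b
      ≤ (m + 2) * s ^ m * (3 * κ * (1 + y / κ) ^ (1 + δ)) * ε +
        (m + 2) ^ 2 * κ / δ * (1 + y / κ) ^ (1 + δ) * s ^ m * ε := by
        gcongr ?_ + _ * ?_
        calc _ ≤ (m + 2) * s ^ (m + 1) * weightPrimitive δ κ y * ε := by gcongr
          _ ≤ _ := by
            gcongr ?_ * _
            gcongr _ * ?_ * ?_
            exact pow_le_pow_of_le_one hs0 hs1 m.le_succ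
    _ = (3 * (m + 2) + (m + 2) ^ 2 / δ) * ε * κ * X := by rw [hX]; ring
    _ ≤ (3 * (m + 2) + (m + 2) ^ 2 / δ) * ε * κ *
        (2 ^ (1 + δ) * (1 + (y / κ) ^ q * s ^ (m + 2))) := by gcongr
    _ = aprioriConst δ m * ε * (κ + κ * (y / κ) ^ q * s ^ (m + 2)) := by rw [aprioriConst]; ring
    _ = _ := by rw [hκq]; ring

end PointwiseEstimate

section AprioriEstimate

variable {n m : ℕ} {q δ κ ε : ℝ} {a : Fin n → Fin n → Pt n → ℝ} {u ψ : Pt n → ℝ} {C : Set (Pt n)}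

/-- A `C¹` cutoff `ψ` with values in `[0, 1]`, compactly supported in the half-space and equal to
`1` on the core `C`, such that `-∂ₜψ` and the diffusion form of `∇ψ` are bounded by `ε`. -/
structure IsAdaptedCutoff (a : Fin n → Fin n → Pt n → ℝ) (ε : ℝ) (C : Set (Pt n))
    (ψ : Pt n → ℝ) : Prop where
  contDiff : ContDiff ℝ 1 ψ
  hasCompactSupport : HasCompactSupport ψ
  tsupport_subset : tsupport ψ ⊆ halfSpace n
  nonneg : ∀ p, 0 ≤ ψ p
  le_one : ∀ p, ψ p ≤ 1
  eq_one : ∀ p ∈ C, ψ p = 1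
  neg_pdT_le : ∀ p, -pdT ψ p ≤ ε
  diffusionForm_le : ∀ᵐ p ∂volume.restrict (halfSpace n),
    diffusionForm a p (gradX ψ p) (gradX ψ p) ≤ ε

namespace IsAdaptedCutoff

lemma fderiv_eq_zero (h : IsAdaptedCutoff a ε C ψ) {p : Pt n} (hp : p ∉ tsupport ψ ∩ Cᶜ) :
    fderiv ℝ ψ p = 0 := by
  obtain hpψ | hpC := not_and_or.1 hp
  · exact fderiv_of_notMem_tsupport (𝕜 := ℝ) hpψ
  · refine IsLocalMax.fderiv_eq_zero (Eventually.of_forall fun y => ?_)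
    rw [h.eq_one p (not_not.1 hpC)]
    exact h.le_one y

lemma pow_mul_rpow_le (h : IsAdaptedCutoff a ε C ψ) (hq : q ≠ 0) (hδ : 0 < δ) (hδ2 : δ ≤ 1 / 2)
    (hm : (1 + δ) * (m + 2) ≤ m * q) (hκ : 0 < κ) (hε : 0 ≤ ε) {p : Pt n}
    (hu : DifferentiableAt ℝ u p) (hu0 : 0 ≤ u p) (hsymm : (diffusionForm a p).IsSymm)
    (hnonneg : ∀ ξ, 0 ≤ diffusionForm a p ξ ξ)
    (hX : diffusionForm a p (gradX ψ p) (gradX ψ p) ≤ ε) :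
    ψ p ^ (m + 2) * u p ^ q ≤
      pdT (fun y => ψ y ^ (m + 2) * weightPrimitive δ κ (u y)) p -
        weakIntegrand a q u (fun y => ψ y ^ (m + 2) * weight δ κ (u y)) p +
      aprioriConst δ m * ε * (κ * (tsupport ψ).indicator 1 p +
        κ ^ (1 - q) * Cᶜ.indicator (fun y => ψ y ^ (m + 2) * u y ^ q) p) := by
  have hψ0 := h.nonneg p
  have hmain := weakIntegrand_pow_mul_weight_le (m := m) hq hδ (hδ2.trans_lt one_half_lt_one).ne hκ
    (h.contDiff.differentiable one_ne_zero p) hψ0 hu hu0 hsymm hnonneg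
  have hΛ := aprioriConst_nonneg (m := m) hδ.le
  suffices hle : (m + 2) * ψ p ^ (m + 1) * weightPrimitive δ κ (u p) * -pdT ψ p +
      (m + 2) ^ 2 * κ / δ * (1 + u p / κ) ^ (1 + δ) * ψ p ^ m *
        diffusionForm a p (gradX ψ p) (gradX ψ p) ≤
      aprioriConst δ m * ε * (κ * (tsupport ψ).indicator 1 p +
        κ ^ (1 - q) * Cᶜ.indicator (fun y => ψ y ^ (m + 2) * u y ^ q) p) by linarith
  by_cases hp : p ∈ tsupport ψ ∩ Cᶜ
  · rw [indicator_of_mem hp.1, indicator_of_mem hp.2, Pi.one_apply, mul_one]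
    exact cutoff_error_le hδ hδ2 hm hκ hu0 hψ0 (h.le_one p) hε (h.neg_pdT_le p) hX
  · have hfd := h.fderiv_eq_zero hp
    have hT : pdT ψ p = 0 := by rw [pdT, hfd]; rfl
    have hgrad : gradX ψ p = 0 := by ext i; rw [gradX, PiLp.toLp_apply, pdX, hfd]; rfl
    rw [hT, hgrad, map_zero, neg_zero, mul_zero, mul_zero, add_zero]
    have h1 := indicator_nonneg (s := tsupport ψ) (f := (1 : Pt n → ℝ)) (fun _ _ => zero_le_one) p
    have h2 : 0 ≤ Cᶜ.indicator (fun y => ψ y ^ (m + 2) * u y ^ q) p :=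
      indicator_apply_nonneg fun _ => by positivity
    positivity

lemma pow_mul_nonneg (h : IsAdaptedCutoff a ε C ψ) {g : Pt n → ℝ}
    (hg : ∀ p ∈ halfSpace n, 0 ≤ g p) (k : ℕ) (p : Pt n) : 0 ≤ ψ p ^ (k + 1) * g p := by
  by_cases hp : p ∈ halfSpace n
  · exact mul_nonneg (pow_nonneg (h.nonneg p) _) (hg p hp)
  · rw [image_eq_zero_of_notMem_tsupport (mt (@h.tsupport_subset p) hp), zero_pow k.succ_ne_zero,
      zero_mul]

lemma hasCompactSupport_pow_mul (h : IsAdaptedCutoff a ε C ψ) (g : Pt n → ℝ) (k : ℕ) :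
    HasCompactSupport fun p => ψ p ^ (k + 1) * g p :=
  h.hasCompactSupport.of_isClosed_subset (isClosed_tsupport _) (tsupport_pow_mul_subset ψ g k)

lemma tsupport_pow_mul_subset_halfSpace (h : IsAdaptedCutoff a ε C ψ) (g : Pt n → ℝ) (k : ℕ) :
    tsupport (fun p => ψ p ^ (k + 1) * g p) ⊆ halfSpace n :=
  (tsupport_pow_mul_subset ψ g k).trans h.tsupport_subset

lemma integrableOn_pow_mul_rpow (h : IsAdaptedCutoff a ε C ψ) (hq : 1 ≤ q)
    (hu : ContDiffOn ℝ 1 u (halfSpace n)) :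
    IntegrableOn (fun p => ψ p ^ (m + 2) * u p ^ q) (halfSpace n) :=
  ((contDiff_pow_mul_comp (m + 1) isOpen_halfSpace h.contDiff h.tsupport_subset hu fun _ _ =>
    (contDiff_rpow_const_of_le (n := 1) (by exact_mod_cast hq)).contDiffAt
      ).continuous.integrable_of_hasCompactSupport
    (h.hasCompactSupport_pow_mul _ (m + 1))).integrableOn

lemma setIntegral_weakIntegrand_nonneg (h : IsAdaptedCutoff a ε C ψ) (hq : 1 ≤ q) (hκ : 0 < κ)
    (ha : ∀ i j, LocallyIntegrableOn (a i j) (halfSpace n)) (hu : ContDiffOn ℝ 1 u (halfSpace n))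
    (hu0 : ∀ p ∈ halfSpace n, 0 ≤ u p) (hsup : WeakSuperSol a q u) :
    IntegrableOn (weakIntegrand a q u fun p => ψ p ^ (m + 2) * weight δ κ (u p)) (halfSpace n) ∧
      0 ≤ ∫ p in halfSpace n,
        weakIntegrand a q u (fun p => ψ p ^ (m + 2) * weight δ κ (u p)) p := by
  have hφ : ContDiff ℝ 1 fun p => ψ p ^ (m + 2) * weight δ κ (u p) :=
    contDiff_pow_mul_comp (m + 1) isOpen_halfSpace h.contDiff h.tsupport_subset hu
      fun p hp => contDiffAt_weight hκ (hu0 p hp)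
  have hcpt := h.hasCompactSupport_pow_mul (fun p => weight δ κ (u p)) (m + 1)
  have hsub := h.tsupport_pow_mul_subset_halfSpace (fun p => weight δ κ (u p)) (m + 1)
  exact ⟨integrableOn_weakIntegrand hq ha hu hφ hcpt hsub,
    hsup.setIntegral_weakIntegrand_nonneg hq ha hu hφ hcpt hsub
      (h.pow_mul_nonneg (fun p hp => zero_le_one.trans (one_le_weight hκ (hu0 p hp))) (m + 1))⟩

lemma setIntegral_pdT_eq_zero (h : IsAdaptedCutoff a ε C ψ) (hκ : 0 < κ)
    (hu : ContDiffOn ℝ 1 u (halfSpace n)) (hu0 : ∀ p ∈ halfSpace n, 0 ≤ u p) :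
    IntegrableOn (pdT fun p => ψ p ^ (m + 2) * weightPrimitive δ κ (u p)) (halfSpace n) ∧
      ∫ p in halfSpace n, pdT (fun p => ψ p ^ (m + 2) * weightPrimitive δ κ (u p)) p = 0 := by
  have hH : ContDiff ℝ 1 fun p => ψ p ^ (m + 2) * weightPrimitive δ κ (u p) :=
    contDiff_pow_mul_comp (m + 1) isOpen_halfSpace h.contDiff h.tsupport_subset hu
      fun p hp => contDiffAt_weightPrimitive hκ (hu0 p hp)
  have hcpt := h.hasCompactSupport_pow_mul (fun p => weightPrimitive δ κ (u p)) (m + 1)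
  refine ⟨(integrable_fderiv_apply hH hcpt (1, 0)).integrableOn, ?_⟩
  rw [setIntegral_eq_integral_of_forall_compl_eq_zero fun p hp => ?_]
  · exact integral_fderiv_apply_eq_zero hH hcpt (1, 0)
  · rw [pdT, fderiv_of_notMem_tsupport (𝕜 := ℝ) fun hp' =>
      hp (h.tsupport_pow_mul_subset_halfSpace _ (m + 1) hp')]
    rfl

lemma setIntegral_indicator_tsupport_add (h : IsAdaptedCutoff a ε C ψ) (hC : MeasurableSet C)
    {g : Pt n → ℝ} (hg : IntegrableOn g (halfSpace n)) (b c : ℝ) :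
    IntegrableOn (fun p => b * (tsupport ψ).indicator 1 p + c * Cᶜ.indicator g p) (halfSpace n) ∧
      ∫ p in halfSpace n, (b * (tsupport ψ).indicator 1 p + c * Cᶜ.indicator g p) =
        b * volume.real (tsupport ψ) + c * ∫ p in Cᶜ, g p ∂volume.restrict (halfSpace n) := by
  have hmeas : MeasurableSet (tsupport ψ) := (isClosed_tsupport ψ).measurableSet
  have htsupport : IntegrableOn ((tsupport ψ).indicator (1 : Pt n → ℝ)) (halfSpace n) :=
    ((integrable_indicator_iff hmeas).2
      (integrableOn_const h.hasCompactSupport.measure_lt_top.ne)).integrableOn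
  have htail : IntegrableOn (Cᶜ.indicator g) (halfSpace n) := hg.indicator hC.compl
  refine ⟨(htsupport.const_mul b).fun_add (htail.const_mul c), ?_⟩
  rw [integral_add (htsupport.const_mul b) (htail.const_mul c), integral_const_mul,
    integral_const_mul, integral_indicator_one hmeas, measureReal_restrict_apply hmeas,
    inter_eq_left.2 h.tsupport_subset, integral_indicator hC.compl]

theorem setIntegral_pow_mul_rpow_le (h : IsAdaptedCutoff a ε C ψ) (hq : 1 ≤ q) (hδ : 0 < δ)
    (hδ2 : δ ≤ 1 / 2) (hm : (1 + δ) * (m + 2) ≤ m * q) (hκ : 0 < κ) (hε : 0 ≤ ε)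
    (hC : MeasurableSet C) (ha : ∀ i j, LocallyIntegrableOn (a i j) (halfSpace n))
    (hsymm : ∀ᵐ p ∂volume.restrict (halfSpace n), (diffusionForm a p).IsSymm)
    (hnonneg : ∀ᵐ p ∂volume.restrict (halfSpace n), ∀ ξ, 0 ≤ diffusionForm a p ξ ξ)
    (hu : ContDiffOn ℝ 1 u (halfSpace n)) (hu0 : ∀ p ∈ halfSpace n, 0 ≤ u p)
    (hsup : WeakSuperSol a q u) :
    ∫ p in halfSpace n, ψ p ^ (m + 2) * u p ^ q ≤
      aprioriConst δ m * ε * (κ * volume.real (tsupport ψ) +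
        κ ^ (1 - q) * ∫ p in Cᶜ, ψ p ^ (m + 2) * u p ^ q ∂volume.restrict (halfSpace n)) := by
  obtain ⟨hHi, hH0⟩ := h.setIntegral_pdT_eq_zero (m := m) (δ := δ) hκ hu hu0
  obtain ⟨hφi, hφ0⟩ :=
    h.setIntegral_weakIntegrand_nonneg (m := m) (δ := δ) hq hκ ha hu hu0 hsup
  have hint := h.integrableOn_pow_mul_rpow (m := m) hq hu
  obtain ⟨hEi, hE⟩ := h.setIntegral_indicator_tsupport_add hC hint κ (κ ^ (1 - q))
  calc ∫ p in halfSpace n, ψ p ^ (m + 2) * u p ^ q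
      ≤ ∫ p in halfSpace n, (pdT (fun y => ψ y ^ (m + 2) * weightPrimitive δ κ (u y)) p -
          weakIntegrand a q u (fun y => ψ y ^ (m + 2) * weight δ κ (u y)) p +
        aprioriConst δ m * ε * (κ * (tsupport ψ).indicator 1 p +
          κ ^ (1 - q) * Cᶜ.indicator (fun y => ψ y ^ (m + 2) * u y ^ q) p)) := by
        refine integral_mono_ae hint ((hHi.fun_sub hφi).fun_add (hEi.const_mul _)) ?_
        filter_upwards [hsymm, hnonneg, h.diffusionForm_le, ae_restrict_mem measurableSet_halfSpace]
          with p hp1 hp2 hp3 hpS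
        exact h.pow_mul_rpow_le (zero_lt_one.trans_le hq).ne' hδ hδ2 hm hκ hε
          ((hu.contDiffAt (isOpen_halfSpace.mem_nhds hpS)).differentiableAt one_ne_zero)
          (hu0 p hpS) hp1 hp2 hp3
    _ = aprioriConst δ m * ε * (κ * volume.real (tsupport ψ) +
          κ ^ (1 - q) * ∫ p in Cᶜ, ψ p ^ (m + 2) * u p ^ q ∂volume.restrict (halfSpace n)) -
        ∫ p in halfSpace n,
          weakIntegrand a q u (fun y => ψ y ^ (m + 2) * weight δ κ (u y)) p := by
        rw [integral_add (hHi.fun_sub hφi) (hEi.const_mul _), integral_sub hHi hφi, hH0,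
          integral_const_mul, hE]
        ring
    _ ≤ _ := sub_le_self _ hφ0

end IsAdaptedCutoff

end AprioriEstimate

section Cutoff

open scoped Gradient

variable {n : ℕ} {R T α c M : ℝ}

lemma hasFDerivAt_fst_mul_snd {f : ℝ → ℝ} {g : Xn n → ℝ} {p : Pt n}
    (hf : DifferentiableAt ℝ f p.1) (hg : DifferentiableAt ℝ g p.2) :
    HasFDerivAt (fun y : Pt n => f y.1 * g y.2)
      (f p.1 • (fderiv ℝ g p.2).comp (ContinuousLinearMap.snd ℝ ℝ (Xn n)) +
        g p.2 • deriv f p.1 • ContinuousLinearMap.fst ℝ ℝ (Xn n)) p :=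
  (hf.hasDerivAt.comp_hasFDerivAt p hasFDerivAt_fst).mul (hg.hasFDerivAt.comp p hasFDerivAt_snd)

lemma pdT_fst_mul_snd {f : ℝ → ℝ} {g : Xn n → ℝ} {p : Pt n} (hf : DifferentiableAt ℝ f p.1)
    (hg : DifferentiableAt ℝ g p.2) :
    pdT (fun y => f y.1 * g y.2) p = deriv f p.1 * g p.2 := by
  simp [pdT, (hasFDerivAt_fst_mul_snd hf hg).fderiv, mul_comm]

lemma gradX_fst_mul_snd {f : ℝ → ℝ} {g : Xn n → ℝ} {p : Pt n} (hf : DifferentiableAt ℝ f p.1)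
    (hg : DifferentiableAt ℝ g p.2) :
    gradX (fun y => f y.1 * g y.2) p = f p.1 • ∇ g p.2 := by
  ext i
  have hi : ∇ g p.2 i = fderiv ℝ g p.2 (EuclideanSpace.single i 1) := by
    rw [← inner_gradient_left, EuclideanSpace.inner_single_right, one_mul]; rfl
  simp [gradX, pdX, (hasFDerivAt_fst_mul_snd hf hg).fderiv, hi]

lemma exists_abs_deriv_smoothTransition_le : ∃ M, ∀ x, |deriv smoothTransition x| ≤ M := by
  have hsupp : HasCompactSupport (deriv smoothTransition) := by
    refine HasCompactSupport.intro (isCompact_Icc (a := 0) (b := 1)) fun x hx => ?_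
    obtain hx0 | hx1 : x < 0 ∨ 1 < x := by simpa only [mem_Icc, not_and_or, not_le] using hx
    · refine IsLocalMin.deriv_eq_zero (Eventually.of_forall fun y => ?_)
      rw [smoothTransition.zero_of_nonpos hx0.le]
      exact smoothTransition.nonneg y
    · refine IsLocalMax.deriv_eq_zero (Eventually.of_forall fun y => ?_)
      rw [smoothTransition.one_of_one_le hx1.le]
      exact smoothTransition.le_one y
  exact hsupp.exists_bound_of_continuous (smoothTransition.contDiff.continuous_deriv le_rfl)

/-- A smooth function of time which is `1` on `[1/R, T]` and vanishes outside `[1/(2R), 2T]`. -/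
def timeCutoff (R T t : ℝ) : ℝ := smoothTransition (2 * R * t - 1) * smoothTransition (2 - t / T)

lemma contDiff_timeCutoff : ContDiff ℝ 1 (timeCutoff R T) :=
  (smoothTransition.contDiff.comp (by fun_prop)).mul (smoothTransition.contDiff.comp (by fun_prop))

lemma timeCutoff_nonneg (t : ℝ) : 0 ≤ timeCutoff R T t :=
  mul_nonneg (smoothTransition.nonneg _) (smoothTransition.nonneg _)

lemma timeCutoff_le_one (t : ℝ) : timeCutoff R T t ≤ 1 :=
  mul_le_one₀ (smoothTransition.le_one _) (smoothTransition.nonneg _) (smoothTransition.le_one _)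

lemma timeCutoff_eq_one (hR : 0 < R) (hT : 0 < T) {t : ℝ} (ht : t ∈ Icc (1 / R) T) :
    timeCutoff R T t = 1 := by
  have h1 := (div_le_iff₀' hR).1 ht.1
  have h2 := (div_le_one hT).2 ht.2
  rw [timeCutoff, smoothTransition.one_of_one_le (by linarith),
    smoothTransition.one_of_one_le (by linarith), one_mul]

lemma support_timeCutoff_subset (hR : 0 < R) (hT : 0 < T) :
    Function.support (timeCutoff R T) ⊆ Icc (1 / (2 * R)) (2 * T) := by
  intro t ht
  have h1 := mt smoothTransition.zero_of_nonpos (left_ne_zero_of_mul ht)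
  have h2 := mt smoothTransition.zero_of_nonpos (right_ne_zero_of_mul ht)
  rw [mem_Icc, div_le_iff₀' (by positivity), ← div_le_iff₀ hT]
  constructor <;> linarith

lemma neg_deriv_timeCutoff_le (hM : ∀ x, |deriv smoothTransition x| ≤ M) (hR : 0 ≤ R)
    (hT : 0 ≤ T) (t : ℝ) : -deriv (timeCutoff R T) t ≤ M / T := by
  have hσ (x : ℝ) : HasDerivAt smoothTransition (deriv smoothTransition x) x :=
    (smoothTransition.contDiff.differentiable one_ne_zero x).hasDerivAt
  have hderiv : HasDerivAt (timeCutoff R T) (deriv smoothTransition (2 * R * t - 1) * (2 * R) *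
      smoothTransition (2 - t / T) + smoothTransition (2 * R * t - 1) *
        (deriv smoothTransition (2 - t / T) * -(1 / T))) t := by
    refine ((hσ _).comp t ?_).mul ((hσ _).comp t (((hasDerivAt_id t).div_const T).const_sub 2))
    simpa using ((hasDerivAt_id t).const_mul (2 * R)).sub_const 1
  have hincr : 0 ≤ deriv smoothTransition (2 * R * t - 1) * (2 * R) *
      smoothTransition (2 - t / T) :=
    mul_nonneg (mul_nonneg smoothTransition.monotone.deriv_nonneg (by positivity))
      (smoothTransition.nonneg _)
  have hdecr : smoothTransition (2 * R * t - 1) * deriv smoothTransition (2 - t / T) ≤ M :=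
    (mul_le_of_le_one_left smoothTransition.monotone.deriv_nonneg
      (smoothTransition.le_one _)).trans ((le_abs_self _).trans (hM _))
  have hdiv := div_le_div_of_nonneg_right hdecr hT
  rw [hderiv.deriv]
  linear_combination hincr + hdiv

/-- A smooth function of space which is `1` on the ball of radius `1/2` and vanishes outside the
unit ball. -/
def unitBump (n : ℕ) : ContDiffBump (0 : Xn n) := ⟨1 / 2, 1, by norm_num, by norm_num⟩

lemma gradient_comp_smul {E : Type*} [NormedAddCommGroup E] [InnerProductSpace ℝ E]
    [CompleteSpace E] (g : E → ℝ) (r : ℝ) (x : E) :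
    ∇ (fun y => g (r • y)) x = r • ∇ g (r • x) := by
  rw [gradient, fderiv_comp_smul, map_smul, gradient]

lemma gradient_unitBump_eq_zero {x : Xn n} (hx : ¬ (1 / 2 < ‖x‖ ∧ ‖x‖ < 1)) :
    ∇ (unitBump n) x = 0 := by
  rw [gradient, LinearIsometryEquiv.map_eq_zero_iff]
  obtain hx | hx := not_and_or.1 hx
  · refine IsLocalMax.fderiv_eq_zero (Eventually.of_forall fun y => ?_)
    rw [(unitBump n).one_of_mem_closedBall (mem_closedBall_zero_iff.2 (not_lt.1 hx))]
    exact (unitBump n).le_one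
  · refine IsLocalMin.fderiv_eq_zero (Eventually.of_forall fun y => ?_)
    rw [(unitBump n).zero_of_le_dist ((not_lt.1 hx).trans_eq (dist_zero_right x).symm)]
    exact (unitBump n).nonneg

lemma exists_norm_gradient_unitBump_le (n : ℕ) : ∃ M, ∀ x, ‖∇ (unitBump n) x‖ ≤ M := by
  obtain ⟨M, hM⟩ := ((unitBump n).hasCompactSupport.fderiv ℝ).exists_bound_of_continuous
    ((unitBump n).contDiff.continuous_fderiv (n := 1) one_ne_zero)
  exact ⟨M, fun x => (LinearIsometryEquiv.norm_map _ _).trans_le (hM x)⟩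

/-- The cutoff function of the parabolic cylinder of radius `R` and height `T`. -/
def cylinderCutoff (n : ℕ) (R T : ℝ) (p : Pt n) : ℝ :=
  timeCutoff R T p.1 * unitBump n (R⁻¹ • p.2)

/-- A cylinder on which `cylinderCutoff n R T` is equal to `1`. -/
def cylinderCore (n : ℕ) (R T : ℝ) : Set (Pt n) := Icc (1 / R) T ×ˢ closedBall 0 (R / 2)

/-- A compact cylinder containing the support of `cylinderCutoff n R T`. -/
def cylinderBox (n : ℕ) (R T : ℝ) : Set (Pt n) := Icc (1 / (2 * R)) (2 * T) ×ˢ closedBall 0 R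

lemma measurableSet_cylinderCore : MeasurableSet (cylinderCore n R T) :=
  measurableSet_Icc.prod measurableSet_closedBall

lemma isCompact_cylinderBox : IsCompact (cylinderBox n R T) :=
  isCompact_Icc.prod (isCompact_closedBall _ _)

lemma cylinderBox_subset_halfSpace (hR : 0 < R) : cylinderBox n R T ⊆ halfSpace n :=
  fun _ hp => lt_of_lt_of_le (by positivity : 0 < 1 / (2 * R)) hp.1.1

lemma volume_real_cylinderBox_le (hR : 0 ≤ R) (hT : 0 ≤ T) :
    volume.real (cylinderBox n R T) ≤ 2 * volume.real (closedBall (0 : Xn n) 1) * (T * R ^ n) := by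
  have htime : volume.real (Icc (1 / (2 * R)) (2 * T)) ≤ 2 * T := by
    rw [volume_real_Icc]
    exact max_le (sub_le_self _ (by positivity)) (by positivity)
  calc volume.real (cylinderBox n R T)
      = volume.real (Icc (1 / (2 * R)) (2 * T)) *
          (R ^ n * volume.real (closedBall (0 : Xn n) 1)) := by
        rw [cylinderBox, Measure.volume_eq_prod, measureReal_prod_prod,
          Measure.addHaar_real_closedBall' _ _ hR, finrank_euclideanSpace_fin]
    _ ≤ 2 * T * (R ^ n * volume.real (closedBall (0 : Xn n) 1)) := by gcongr
    _ = _ := by ring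

lemma norm_inv_smul {E : Type*} [NormedAddCommGroup E] [NormedSpace ℝ E] (hR : 0 ≤ R) (x : E) :
    ‖R⁻¹ • x‖ = ‖x‖ / R := by
  rw [norm_smul, norm_inv, norm_of_nonneg hR, inv_mul_eq_div]

lemma cylinderCutoff_eq_one (hR : 0 < R) (hT : 0 < T) {p : Pt n} (hp : p ∈ cylinderCore n R T) :
    cylinderCutoff n R T p = 1 := by
  rw [cylinderCutoff, timeCutoff_eq_one hR hT hp.1, one_mul]
  refine (unitBump n).one_of_mem_closedBall (mem_closedBall_zero_iff.2 ?_)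
  rw [norm_inv_smul hR.le, div_le_iff₀ hR]
  exact (mem_closedBall_zero_iff.1 hp.2).trans_eq (one_div_mul_eq_div 2 R).symm

lemma tsupport_cylinderCutoff_subset (hR : 0 < R) (hT : 0 < T) :
    tsupport (cylinderCutoff n R T) ⊆ cylinderBox n R T := by
  refine closure_minimal (fun p hp => ⟨?_, ?_⟩) isCompact_cylinderBox.isClosed
  · exact support_timeCutoff_subset hR hT (left_ne_zero_of_mul hp)
  · have hx : R⁻¹ • p.2 ∈ ball (0 : Xn n) 1 :=
      (unitBump n).support_eq ▸ right_ne_zero_of_mul hp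
    rw [mem_ball_zero_iff, norm_inv_smul hR.le, div_lt_one hR] at hx
    exact mem_closedBall_zero_iff.2 hx.le

lemma neg_pdT_cylinderCutoff_le (hM : ∀ x, |deriv smoothTransition x| ≤ M) (hR : 0 ≤ R)
    (hT : 0 ≤ T) (p : Pt n) : -pdT (cylinderCutoff n R T) p ≤ M / T := by
  have hM0 : 0 ≤ M / T := div_nonneg ((abs_nonneg _).trans (hM 0)) hT
  have hpdT : pdT (cylinderCutoff n R T) p =
      deriv (timeCutoff R T) p.1 * unitBump n (R⁻¹ • p.2) :=
    pdT_fst_mul_snd (contDiff_timeCutoff.differentiable one_ne_zero _)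
      (((unitBump n).contDiff.comp (contDiff_const_smul R⁻¹)).differentiable one_ne_zero _)
  rw [hpdT, ← neg_mul]
  exact (mul_le_mul_of_nonneg_right (neg_deriv_timeCutoff_le hM hR hT p.1)
    (unitBump n).nonneg).trans (mul_le_of_le_one_right hM0 (unitBump n).le_one)

lemma gradX_cylinderCutoff (p : Pt n) : gradX (cylinderCutoff n R T) p =
    timeCutoff R T p.1 • R⁻¹ • ∇ (unitBump n) (R⁻¹ • p.2) := by
  rw [← gradient_comp_smul]
  exact gradX_fst_mul_snd (contDiff_timeCutoff.differentiable one_ne_zero _)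
    (((unitBump n).contDiff.comp (contDiff_const_smul R⁻¹)).differentiable one_ne_zero _)

lemma norm_gradX_cylinderCutoff_le (hM : ∀ x, ‖∇ (unitBump n) x‖ ≤ M) (hR : 0 < R) (p : Pt n) :
    ‖gradX (cylinderCutoff n R T) p‖ ≤ M / R := by
  rw [gradX_cylinderCutoff, norm_smul, norm_of_nonneg (timeCutoff_nonneg _), norm_inv_smul hR.le]
  exact (mul_le_of_le_one_left (by positivity) (timeCutoff_le_one _)).trans (by gcongr; exact hM _)

lemma gradX_cylinderCutoff_eq_zero (hR : 0 < R) {p : Pt n}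
    (hp : ¬ (R / 2 < ‖p.2‖ ∧ ‖p.2‖ < R)) : gradX (cylinderCutoff n R T) p = 0 := by
  rw [gradX_cylinderCutoff, gradient_unitBump_eq_zero, smul_zero, smul_zero]
  rwa [norm_inv_smul hR.le, div_lt_one hR, lt_div_iff₀' hR, mul_one_div]

lemma diffusionForm_gradX_cylinderCutoff_le {a : Fin n → Fin n → Pt n → ℝ} {p : Pt n}
    (hM : ∀ x, ‖∇ (unitBump n) x‖ ≤ M) (hR : 0 < R)
    (hp : R / 2 < ‖p.2‖ → ‖p.2‖ < R → ∀ ξ, diffusionForm a p ξ ξ ≤ c * R ^ (2 - α) * ‖ξ‖ ^ 2) :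
    diffusionForm a p (gradX (cylinderCutoff n R T) p) (gradX (cylinderCutoff n R T) p) ≤
      |c| * M ^ 2 * R ^ (-α) := by
  by_cases hx : R / 2 < ‖p.2‖ ∧ ‖p.2‖ < R
  · calc _ ≤ |c| * R ^ (2 - α) * (M / R) ^ 2 := by
          refine (hp hx.1 hx.2 _).trans ?_
          gcongr
          · exact le_abs_self c
          · exact norm_gradX_cylinderCutoff_le hM hR p
      _ = |c| * M ^ 2 * R ^ (-α) := by
          rw [sub_eq_add_neg, rpow_add hR, rpow_two]
          field_simp
  · rw [gradX_cylinderCutoff_eq_zero hR hx, map_zero]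
    positivity

theorem exists_forall_isAdaptedCutoff_cylinderCutoff (n : ℕ) (α c : ℝ) :
    ∃ M, 0 ≤ M ∧ ∀ (a : Fin n → Fin n → Pt n → ℝ) (R : ℝ), 0 < R →
      (∀ᵐ p ∂volume.restrict (halfSpace n), R / 2 < ‖p.2‖ → ‖p.2‖ < R → ∀ ξ,
        diffusionForm a p ξ ξ ≤ c * R ^ (2 - α) * ‖ξ‖ ^ 2) →
      IsAdaptedCutoff a (M * R ^ (-α)) (cylinderCore n R (R ^ α)) (cylinderCutoff n R (R ^ α)) := by
  obtain ⟨Mt, hMt⟩ := exists_abs_deriv_smoothTransition_le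
  obtain ⟨Mx, hMx⟩ := exists_norm_gradient_unitBump_le n
  have hMt0 : 0 ≤ Mt := (abs_nonneg _).trans (hMt 0)
  refine ⟨Mt + |c| * Mx ^ 2, by positivity, fun a R hR hgrowth => ?_⟩
  have hRα : 0 < R ^ α := rpow_pos_of_pos hR α
  have hbox := tsupport_cylinderCutoff_subset (n := n) hR hRα
  exact {
    contDiff := (contDiff_timeCutoff.comp contDiff_fst).mul
      ((unitBump n).contDiff.comp (contDiff_snd.const_smul R⁻¹))
    hasCompactSupport := isCompact_cylinderBox.of_isClosed_subset (isClosed_tsupport _) hbox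
    tsupport_subset := hbox.trans (cylinderBox_subset_halfSpace hR)
    nonneg := fun p => mul_nonneg (timeCutoff_nonneg _) (unitBump n).nonneg
    le_one := fun p =>
      mul_le_one₀ (timeCutoff_le_one _) (unitBump n).nonneg (unitBump n).le_one
    eq_one := fun p hp => cylinderCutoff_eq_one hR hRα hp
    neg_pdT_le := fun p => (neg_pdT_cylinderCutoff_le hMt hR.le hRα.le p).trans <| by
      rw [div_eq_mul_inv, ← rpow_neg hR.le]
      gcongr
      exact le_add_of_nonneg_right (by positivity)
    diffusionForm_le := hgrowth.mono fun p hp =>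
      (diffusionForm_gradX_cylinderCutoff_le hMx hR hp).trans <| by
        gcongr
        exact le_add_of_nonneg_left hMt0 }

end Cutoff

section VanishingFromTails

lemma exists_forall_le_of_forall_le_mul_add_rpow {K q : ℝ} (hK : 0 ≤ K) (hq : 1 < q) :
    ∃ I, ∀ x y, 0 ≤ x → y ≤ x → (∀ μ > 0, x ≤ K * (μ + μ ^ (1 - q) * y)) → x ≤ I := by
  have hlim : Tendsto (fun μ : ℝ => K * μ ^ (1 - q)) atTop (𝓝 0) := by
    simpa only [neg_sub, mul_zero] using
      (tendsto_rpow_neg_atTop (sub_pos.2 hq)).const_mul K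
  obtain ⟨μ, hμ, hμ0⟩ :=
    ((hlim.eventually_le_const one_half_pos).and (eventually_gt_atTop 0)).exists
  refine ⟨2 * (K * μ), fun x y hx hyx h => ?_⟩
  have hy : K * μ ^ (1 - q) * y ≤ 1 / 2 * x :=
    (mul_le_mul_of_nonneg_left hyx (by positivity)).trans (mul_le_mul_of_nonneg_right hμ hx)
  linarith [h μ hμ0]

variable {X ι : Type*} [MeasurableSpace X] {ν : Measure X} {l : Filter ι} {s : ι → Set X}
  {f : ι → X → ℝ} {g : X → ℝ} {K q : ℝ}

lemma setIntegral_le_integral_of_eqOn {s : Set X} {f g : X → ℝ} (hs : MeasurableSet s)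
    (hf : Integrable f ν) (hf0 : 0 ≤ᵐ[ν] f) (hfg : EqOn f g s) :
    ∫ x in s, g x ∂ν ≤ ∫ x, f x ∂ν := by
  rw [← setIntegral_congr_fun hs hfg]
  exact setIntegral_le_integral hf hf0

lemma integrable_of_forall_integral_le_rpow [l.NeBot] [l.IsCountablyGenerated]
    (hs : AECover ν l s) (hf : ∀ i, Integrable (f i) ν) (hf0 : ∀ i, 0 ≤ᵐ[ν] f i)
    (hg0 : 0 ≤ᵐ[ν] g) (hfs : ∀ i, EqOn (f i) g (s i)) (hK : 0 ≤ K) (hq : 1 < q)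
    (h : ∀ i, ∀ μ > 0, ∫ x, f i x ∂ν ≤ K * (μ + μ ^ (1 - q) * ∫ x in (s i)ᶜ, f i x ∂ν)) :
    Integrable g ν := by
  obtain ⟨I, hI⟩ := exists_forall_le_of_forall_le_mul_add_rpow hK hq
  refine hs.integrable_of_integral_bounded_of_nonneg_ae I (fun i => ?_) hg0
    (Eventually.of_forall fun i => ?_)
  · exact (hf i).integrableOn.congr_fun (hfs i) (hs.measurableSet i)
  · exact (setIntegral_le_integral_of_eqOn (hs.measurableSet i) (hf i) (hf0 i) (hfs i)).trans
      (hI _ _ (integral_nonneg_of_ae (hf0 i)) (setIntegral_le_integral (hf i) (hf0 i)) (h i))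

/- Taking `μ` large in the estimate makes `g` integrable; then the tails of `g` tend to zero, so
that `∫ g ≤ K μ` for every `μ > 0`. -/
theorem ae_eq_zero_of_forall_integral_le_rpow [l.NeBot] [l.IsCountablyGenerated]
    (hs : AECover ν l s) (hf : ∀ i, Integrable (f i) ν) (hf0 : ∀ i, 0 ≤ᵐ[ν] f i)
    (hfg : ∀ i, f i ≤ᵐ[ν] g) (hfs : ∀ i, EqOn (f i) g (s i)) (hK : 0 ≤ K) (hq : 1 < q)
    (h : ∀ i, ∀ μ > 0, ∫ x, f i x ∂ν ≤ K * (μ + μ ^ (1 - q) * ∫ x in (s i)ᶜ, f i x ∂ν)) :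
    g =ᵐ[ν] 0 := by
  obtain ⟨i₀⟩ := l.nonempty_of_neBot
  have hg0 : 0 ≤ᵐ[ν] g := (hf0 i₀).trans (hfg i₀)
  have hg := integrable_of_forall_integral_le_rpow hs hf hf0 hg0 hfs hK hq h
  have hlim := hs.integral_tendsto_of_countably_generated hg
  have htail : Tendsto (fun i => ∫ x in (s i)ᶜ, g x ∂ν) l (𝓝 0) := by
    simpa only [setIntegral_compl (hs.measurableSet _) hg, sub_self] using
      hlim.const_sub (∫ x, g x ∂ν)
  have hmono (i : ι) : ∫ x in (s i)ᶜ, f i x ∂ν ≤ ∫ x in (s i)ᶜ, g x ∂ν :=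
    setIntegral_mono_ae (hf i).integrableOn hg.integrableOn (hfg i)
  have hle : ∀ μ > 0, ∫ x, g x ∂ν ≤ K * μ := fun μ hμ => by
    have hrhs : Tendsto (fun i => K * (μ + μ ^ (1 - q) * ∫ x in (s i)ᶜ, g x ∂ν)) l
        (𝓝 (K * μ)) := by
      simpa only [mul_zero, add_zero] using ((htail.const_mul _).const_add μ).const_mul K
    refine le_of_tendsto_of_tendsto' hlim hrhs fun i => ?_
    refine (setIntegral_le_integral_of_eqOn (hs.measurableSet i) (hf i) (hf0 i) (hfs i)).trans
      ((h i μ hμ).trans ?_)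
    exact mul_le_mul_of_nonneg_left (by gcongr μ + μ ^ (1 - q) * ?_; exact hmono i) hK
  have hsmall : Tendsto (fun μ => K * μ) (𝓝[>] 0) (𝓝 0) :=
    ((continuous_const_mul K).tendsto' 0 0 (mul_zero K)).mono_left nhdsWithin_le_nhds
  exact (integral_eq_zero_iff_of_nonneg_ae hg0 hg).1 <| le_antisymm
    (ge_of_tendsto hsmall (eventually_mem_nhdsWithin.mono hle)) (integral_nonneg_of_ae hg0)

end VanishingFromTails

section Liouville

variable {n m : ℕ} {α c q δ M R : ℝ} {a : Fin n → Fin n → Pt n → ℝ} {u : Pt n → ℝ}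

lemma aecover_cylinderCore (n : ℕ) (hα : 0 < α) :
    AECover (volume.restrict (halfSpace n)) atTop fun R => cylinderCore n R (R ^ α) where
  ae_eventually_mem := by
    filter_upwards [ae_restrict_mem measurableSet_halfSpace] with p hp
    filter_upwards [eventually_gt_atTop 0, eventually_ge_atTop (1 / p.1),
      (tendsto_rpow_atTop hα).eventually_ge_atTop p.1, eventually_ge_atTop (2 * ‖p.2‖)]
      with R hR hR1 hR2 hR3
    exact ⟨⟨(one_div_le hR hp).2 hR1, hR2⟩,
      mem_closedBall_zero_iff.2 ((le_div_iff₀' two_pos).2 hR3)⟩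
  measurableSet _ := measurableSet_cylinderCore

lemma volume_real_tsupport_cylinderCutoff_le (hR : 0 < R) :
    volume.real (tsupport (cylinderCutoff n R (R ^ α))) ≤
      2 * volume.real (closedBall (0 : Xn n) 1) * (R ^ α * R ^ n) :=
  (measureReal_mono (tsupport_cylinderCutoff_subset hR (rpow_pos_of_pos hR α))
    isCompact_cylinderBox.measure_lt_top.ne).trans
    (volume_real_cylinderBox_le hR.le (rpow_nonneg hR.le α))

/- The scaling `κ = μ R^(-n)` balances the two terms of the a priori estimate on the cylinder: the
first becomes proportional to `μ`, and `R^(n (q - 1) - α) ≤ 1` in the second. -/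
lemma cylinder_error_le {V Λ J μ : ℝ} (hR : 1 ≤ R) (hqα : n * (q - 1) ≤ α) (hΛ : 0 ≤ Λ)
    (hV : 0 ≤ V) (hJ : 0 ≤ J) (hμ : 0 < μ) :
    Λ * R ^ (-α) * (μ * R ^ (-n : ℝ) * (V * (R ^ α * R ^ n)) + (μ * R ^ (-n : ℝ)) ^ (1 - q) * J) ≤
      Λ * (V + 1) * (μ + μ ^ (1 - q) * J) := by
  have hR0 : 0 < R := zero_lt_one.trans_le hR
  have hscale : (μ * R ^ (-n : ℝ)) ^ (1 - q) ≤ μ ^ (1 - q) * R ^ α := by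
    rw [mul_rpow hμ.le (by positivity), ← rpow_mul hR0.le]
    gcongr
    linarith
  have hb : 0 ≤ μ ^ (1 - q) * J := by positivity
  calc Λ * R ^ (-α) * (μ * R ^ (-n : ℝ) * (V * (R ^ α * R ^ n)) +
        (μ * R ^ (-n : ℝ)) ^ (1 - q) * J)
      ≤ Λ * R ^ (-α) * (μ * R ^ (-n : ℝ) * (V * (R ^ α * R ^ n)) +
          μ ^ (1 - q) * R ^ α * J) := by gcongr
    _ = Λ * (V * μ + μ ^ (1 - q) * J) := by
        rw [rpow_neg hR0.le, rpow_neg hR0.le, rpow_natCast]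
        field_simp
    _ ≤ Λ * ((V + 1) * (μ + μ ^ (1 - q) * J)) := by
        refine mul_le_mul_of_nonneg_left ?_ hΛ
        linarith [mul_nonneg hV hb]
    _ = _ := by ring

lemma setIntegral_cylinderCutoff_pow_mul_rpow_le (hR : 1 ≤ R) (hM : 0 ≤ M)
    (hψ : IsAdaptedCutoff a (M * R ^ (-α)) (cylinderCore n R (R ^ α))
      (cylinderCutoff n R (R ^ α)))
    (hq : 1 ≤ q) (hqα : n * (q - 1) ≤ α) (hδ : 0 < δ) (hδ2 : δ ≤ 1 / 2)
    (hm : (1 + δ) * (m + 2) ≤ m * q) (ha : ∀ i j, LocallyIntegrableOn (a i j) (halfSpace n))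
    (hsymm : ∀ᵐ p ∂volume.restrict (halfSpace n), (diffusionForm a p).IsSymm)
    (hnonneg : ∀ᵐ p ∂volume.restrict (halfSpace n), ∀ ξ, 0 ≤ diffusionForm a p ξ ξ)
    (hu : ContDiffOn ℝ 1 u (halfSpace n)) (hu0 : ∀ p ∈ halfSpace n, 0 ≤ u p)
    (hsup : WeakSuperSol a q u) {μ : ℝ} (hμ : 0 < μ) :
    ∫ p in halfSpace n, cylinderCutoff n R (R ^ α) p ^ (m + 2) * u p ^ q ≤
      aprioriConst δ m * M * (2 * volume.real (closedBall (0 : Xn n) 1) + 1) *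
        (μ + μ ^ (1 - q) * ∫ p in (cylinderCore n R (R ^ α))ᶜ,
          cylinderCutoff n R (R ^ α) p ^ (m + 2) * u p ^ q ∂volume.restrict (halfSpace n)) := by
  have hR0 : 0 < R := zero_lt_one.trans_le hR
  have hΛ : 0 ≤ aprioriConst δ m * M := mul_nonneg (aprioriConst_nonneg hδ.le) hM
  have hJ : 0 ≤ ∫ p in (cylinderCore n R (R ^ α))ᶜ, cylinderCutoff n R (R ^ α) p ^ (m + 2) * u p ^ q
      ∂volume.restrict (halfSpace n) :=
    integral_nonneg fun p => hψ.pow_mul_nonneg (fun p hp => rpow_nonneg (hu0 p hp) q) (m + 1) p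
  refine (hψ.setIntegral_pow_mul_rpow_le hq hδ hδ2 hm (κ := μ * R ^ (-n : ℝ)) (by positivity)
    (by positivity) measurableSet_cylinderCore ha hsymm hnonneg hu hu0 hsup).trans
    (le_trans ?_ (cylinder_error_le hR hqα hΛ (by positivity) hJ hμ))
  rw [← mul_assoc (aprioriConst δ m)]
  gcongr
  exact volume_real_tsupport_cylinderCutoff_le hR0

theorem liouville_nonneg_supersol_general (hα : 0 < α) (hq : 1 < q) (hqα : n * (q - 1) ≤ α)
    (ha : ∀ i j, LocallyIntegrableOn (a i j) (halfSpace n))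
    (hsymm : ∀ᵐ p ∂volume.restrict (halfSpace n), (diffusionForm a p).IsSymm)
    (hnonneg : ∀ᵐ p ∂volume.restrict (halfSpace n), ∀ ξ, 0 ≤ diffusionForm a p ξ ξ)
    (hgrowth : ∃ᶠ R in atTop, ∀ᵐ p ∂volume.restrict (halfSpace n),
      R / 2 < ‖p.2‖ → ‖p.2‖ < R → ∀ ξ, diffusionForm a p ξ ξ ≤ c * R ^ (2 - α) * ‖ξ‖ ^ 2)
    (hu : ContDiffOn ℝ 1 u (halfSpace n)) (hsup : WeakSuperSol a q u)
    (hu0 : ∀ p ∈ halfSpace n, 0 ≤ u p) : ∀ p ∈ halfSpace n, u p = 0 := by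
  obtain ⟨δ, hδ, hδ2, m, hm⟩ := exists_exponents hq
  obtain ⟨M, hM, hcutoff⟩ := exists_forall_isAdaptedCutoff_cylinderCutoff n α c
  obtain ⟨R, hR, hRk⟩ :=
    exists_seq_forall_of_frequently (hgrowth.and_eventually (eventually_ge_atTop 1))
  have hψ (k : ℕ) := hcutoff a (R k) (zero_lt_one.trans_le (hRk k).2) (hRk k).1
  have hae : (fun p => u p ^ q) =ᵐ[volume.restrict (halfSpace n)] 0 := by
    have hpos : ∀ᵐ p ∂volume.restrict (halfSpace n), 0 ≤ u p ^ q :=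
      (ae_restrict_mem measurableSet_halfSpace).mono fun p hp => rpow_nonneg (hu0 p hp) q
    have hΛ : 0 ≤ aprioriConst δ m := aprioriConst_nonneg hδ.le
    refine ae_eq_zero_of_forall_integral_le_rpow ((aecover_cylinderCore n hα).comp_tendsto hR)
      (fun k => (hψ k).integrableOn_pow_mul_rpow (m := m) hq.le hu)
      (fun k => hpos.mono fun p hp => mul_nonneg (pow_nonneg ((hψ k).nonneg p) _) hp)
      (fun k => hpos.mono fun p hp =>
        mul_le_of_le_one_left hp (pow_le_one₀ ((hψ k).nonneg p) ((hψ k).le_one p)))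
      (fun k p hp => ?_) (by positivity) hq fun k μ hμ =>
        setIntegral_cylinderCutoff_pow_mul_rpow_le (hRk k).2 hM (hψ k) hq.le hqα hδ hδ2 hm ha hsymm
          hnonneg hu hu0 hsup hμ
    simp only [(hψ k).eq_one p hp, one_pow, one_mul]
  have hzero : EqOn (fun p => u p ^ q) 0 (halfSpace n) :=
    Measure.eqOn_open_of_ae_eq hae isOpen_halfSpace
      (hu.continuousOn.rpow_const fun _ _ => Or.inr (zero_lt_one.trans hq).le) continuousOn_const
  exact fun p hp => (rpow_eq_zero (hu0 p hp) (zero_lt_one.trans hq).ne').1 (hzero hp)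

lemma locallyIntegrableOn_of_forall_isCompact_bounded {X E : Type*} [TopologicalSpace X]
    [LocallyCompactSpace X] [MeasurableSpace X] [OpensMeasurableSpace X] [T2Space X]
    {μ : Measure X} [IsFiniteMeasureOnCompacts μ] [NormedAddCommGroup E] {U : Set X} {f : X → E}
    (hU : IsLocallyClosed U) (hf : AEStronglyMeasurable f μ)
    (hbdd : ∀ K ⊆ U, IsCompact K → ∃ C, ∀ x ∈ K, ‖f x‖ ≤ C) : LocallyIntegrableOn f U μ := by
  refine (locallyIntegrableOn_iff hU).2 fun K hKU hK => ?_
  obtain ⟨C, hC⟩ := hbdd K hKU hK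
  exact Measure.integrableOn_of_bounded hK.measure_lt_top.ne hf
    (ae_restrict_of_forall_mem hK.measurableSet hC)

lemma Cond8.ae_diffusionForm_le {A : Pt n → ℝ} (h : Cond8 A α c) (hR : 1 < R)
    (hform : ∀ᵐ p ∂volume.restrict (halfSpace n), ∀ ξ, diffusionForm a p ξ ξ ≤ A p * ‖ξ‖ ^ 2) :
    ∀ᵐ p ∂volume.restrict (halfSpace n), R / 2 < ‖p.2‖ → ‖p.2‖ < R → ∀ ξ,
      diffusionForm a p ξ ξ ≤ c * R ^ (2 - α) * ‖ξ‖ ^ 2 := by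
  filter_upwards [hform, ae_restrict_mem measurableSet_halfSpace,
    ae_restrict_of_ae (ae_imp_of_ae_restrict (h R hR))] with p hp hpS hA hp1 hp2 ξ
  exact (hp ξ).trans (by gcongr; exact hA ⟨hpS, hp1, hp2⟩)

end Liouville

/-- the Liouville-type theorem for non-negative weak
super-solutions (Theorem 3). -/
theorem liouville_nonneg_supersol
    (n : ℕ) (hn : 1 ≤ n) (α c q : ℝ) (hα : 0 < α) (hc : 0 < c)
    (hq1 : 1 < q) (hq2 : q ≤ 1 + α / n)
    (a : Fin n → Fin n → Pt n → ℝ) (A : Pt n → ℝ)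
    (ha_meas : ∀ i j, Measurable (a i j))
    (ha_locbdd : ∀ i j, ∀ K : Set (Pt n), IsCompact K → K ⊆ halfSpace n →
      ∃ M, ∀ p ∈ K, |a i j p| ≤ M)
    (ha_symm : ∀ i j, ∀ᵐ p ∂(volume.restrict (halfSpace n)), a i j p = a j i p)
    (hA_meas : Measurable A)
    (hA_nonneg : ∀ p, 0 ≤ A p)
    (hA_locbdd : ∀ K : Set (Pt n), IsCompact K → K ⊆ halfSpace n →
      ∃ M, ∀ p ∈ K, A p ≤ M)
    (hform : ∀ᵐ p ∂(volume.restrict (halfSpace n)), ∀ ξ : Xn n,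
      0 ≤ ∑ i, ∑ j, a i j p * ξ i * ξ j ∧
      ∑ i, ∑ j, a i j p * ξ i * ξ j ≤ A p * ‖ξ‖ ^ 2)
    (hcond8 : Cond8 A α c)
    (u : Pt n → ℝ)
    (hu : ContDiffOn ℝ 1 u (halfSpace n))
    (hu_int : LocallyIntegrableOn (fun p => |u p| ^ q) (halfSpace n) volume)
    (hsupersol : WeakSuperSol a q u)
    (hu_nonneg : ∀ p ∈ halfSpace n, 0 ≤ u p) :
    ∀ p ∈ halfSpace n, u p = 0 := by
  have hqα : n * (q - 1) ≤ α := by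
    have hn0 : (0 : ℝ) < n := by exact_mod_cast hn
    exact (le_div_iff₀' hn0).1 (by linarith)
  have ha (i j : Fin n) : LocallyIntegrableOn (a i j) (halfSpace n) :=
    locallyIntegrableOn_of_forall_isCompact_bounded isOpen_halfSpace.isLocallyClosed
      (ha_meas i j).aestronglyMeasurable fun K hKS hK => ha_locbdd i j K hK hKS
  have hsymm : ∀ᵐ p ∂volume.restrict (halfSpace n), (diffusionForm a p).IsSymm :=
    (ae_all_iff.2 fun i => ae_all_iff.2 (ha_symm i)).mono fun p => isSymm_diffusionForm
  exact liouville_nonneg_supersol_general hα hq1 hqα ha hsymm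
    (hform.mono fun p hp ξ => (hp ξ).1)
    ((eventually_gt_atTop 1).frequently.mono fun R hR =>
      hcond8.ae_diffusionForm_le hR (hform.mono fun p hp ξ => (hp ξ).2))
    hu hsupersol hu_nonneg
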